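/- arXiv:1106.0928 — 2 statements merged into one kernel-verified Lean document; each statement's English description precedes it below -/
import Mathlib

section
/- Suppose ∇ is a flat ℝ-linear connection of L on E, p ≥ 1 is odd, and ∇_m is an ℝ-linear connection of L on E that is metric with respect to h, i.e. ρ(a)(h(s,t)) = h((∇_m)_a s, t) + h(s, (∇_m)_a t) for all a ∈ L, s,t ∈ E. Then cs_p(∇, ∇_m) is closed (d_ρ(cs_p(∇,∇_m)) = 0), and cs_p(∇, ∇^h) − 2·cs_p(∇, ∇_m) is d_ρ-exact; hence the secondary characteristic class satisfies u_{2p−1} = [2·cs_p(∇,∇_m)]. -/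
open Module

/-- The trace over `C` of an `ℝ`-linear endomorphism of `E` whose underlying
function happens to be `C`-linear (and `0` otherwise). -/
noncomputable def trR (C : Type*) {E : Type*} [CommRing C] [AddCommGroup E]
    [Module ℝ E] [Module C E] (e : E →ₗ[ℝ] E) : C :=
  letI := Classical.propDecidable
  if h : ∃ g : E →ₗ[C] E, ⇑g = ⇑e then LinearMap.trace C E h.choose else 0

/-- An ℝ-linear connection of the Lie algebra `L` (with anchor `ρ`) on the `C`-module `E`. -/
def IsConn {L C E : Type*} [LieRing L] [LieAlgebra ℝ L] [CommRing C] [Algebra ℝ C]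
    [AddCommGroup E] [Module ℝ E] [Module C E]
    (ρ : L →ₗ[ℝ] Derivation ℝ C C) (D : L →ₗ[ℝ] Module.End ℝ E) : Prop :=
  ∀ (a : L) (f : C) (e : E), D a (f • e) = f • D a e + ρ a f • e

/-- The curvature of an ℝ-linear map `D : L →ₗ[ℝ] End ℝ E`. -/
def curv {L E : Type*} [LieRing L] [LieAlgebra ℝ L] [AddCommGroup E] [Module ℝ E]
    (D : L →ₗ[ℝ] Module.End ℝ E) (a b : L) : Module.End ℝ E :=
  D a * D b - D b * D a - D ⁅a, b⁆

/-- The curvature as an `End ℝ E`-valued 2-form. -/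
def curv2 {L E : Type*} [LieRing L] [LieAlgebra ℝ L] [AddCommGroup E] [Module ℝ E]
    (D : L →ₗ[ℝ] Module.End ℝ E) : (Fin 2 → L) → Module.End ℝ E :=
  fun a => curv D (a 0) (a 1)

/-- The Chevalley–Eilenberg style differential of a `V`-valued `n`-form on `L`,
with respect to an action `act` of `L` on `V`:
`(dω)(a₁,…,a_{n+1}) = Σᵢ (−1)^{i+1} act(aᵢ)(ω(a₁,…,âᵢ,…)) +
  Σ_{i<j} (−1)^{i+j} ω(⁅aᵢ,aⱼ⁆, a₁,…,âᵢ,…,âⱼ,…)`. -/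
def dGen {L V : Type*} [LieRing L] [AddCommGroup V] (act : L → V → V) :
    {n : ℕ} → ((Fin n → L) → V) → ((Fin (n + 1) → L) → V)
  | 0, ω, a => act (a 0) (ω Fin.elim0)
  | (m + 1), ω, a =>
      (∑ i : Fin (m + 2), (-1 : ℤ) ^ (i : ℕ) • act (a i) (ω (fun k => a (i.succAbove k)))) +
      ∑ i : Fin (m + 2), ∑ j : Fin (m + 2),
        if h : (i : ℕ) < (j : ℕ) then
          (-1 : ℤ) ^ ((i : ℕ) + (j : ℕ)) • ω (Fin.cons ⁅a i, a j⁆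
            (fun k : Fin m => a (j.succAbove
              ((⟨(i : ℕ), by have := j.isLt; omega⟩ : Fin (m + 1)).succAbove k))))
        else 0

/-- The differential `d_ρ` on `C`-valued ℝ-linear forms on `L`. -/
def dRho {L C : Type*} [LieRing L] [LieAlgebra ℝ L] [CommRing C] [Algebra ℝ C]
    (ρ : L →ₗ[ℝ] Derivation ℝ C C) {n : ℕ} (ω : (Fin n → L) → C) :
    (Fin (n + 1) → L) → C :=
  dGen (fun a c => ρ a c) ω

/-- The differential `d^{∇̄}` on `End ℝ E`-valued ℝ-linear forms on `L`,
where `∇̄_a = [∇_a, ·]`. -/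
def dEnd {L E : Type*} [LieRing L] [LieAlgebra ℝ L] [AddCommGroup E] [Module ℝ E]
    (D : L →ₗ[ℝ] Module.End ℝ E) {n : ℕ} (ω : (Fin n → L) → Module.End ℝ E) :
    (Fin (n + 1) → L) → Module.End ℝ E :=
  dGen (fun a φ => D a * φ - φ * D a) ω

/-- The wedge product (with composition as multiplication of values) of
`End ℝ E`-valued forms:
`(ω∧η)(a₁,…,a_{m+n}) = (1/(m!·n!)) Σ_{τ} sgn τ · ω(a_{τ(1)},…) ∘ η(a_{τ(m+1)},…)`. -/
noncomputable def wedge {L E : Type*} [AddCommGroup E] [Module ℝ E] {m n : ℕ}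
    (ω : (Fin m → L) → Module.End ℝ E) (η : (Fin n → L) → Module.End ℝ E) :
    (Fin (m + n) → L) → Module.End ℝ E :=
  fun a => ((m.factorial * n.factorial : ℝ))⁻¹ •
    ∑ τ : Equiv.Perm (Fin (m + n)), ((Equiv.Perm.sign τ : ℤ) •
      (ω (fun i => a (τ (Fin.castAdd n i))) * η (fun j => a (τ (Fin.natAdd m j)))))

/-- The `p`-th wedge power of an `End ℝ E`-valued 2-form. -/
noncomputable def wpow {L E : Type*} [AddCommGroup E] [Module ℝ E]
    (R : (Fin 2 → L) → Module.End ℝ E) :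
    (p : ℕ) → (Fin (2 * p) → L) → Module.End ℝ E
  | 0 => fun _ => 1
  | (p + 1) => fun a => wedge R (wpow R p) (fun i => a (Fin.cast (by omega) i))

/-- The `k`-th wedge power of an `End ℝ E`-valued 1-form. -/
noncomputable def wpow1 {L E : Type*} [AddCommGroup E] [Module ℝ E]
    (θ : (Fin 1 → L) → Module.End ℝ E) :
    (k : ℕ) → (Fin k → L) → Module.End ℝ E
  | 0 => fun _ => 1
  | (k + 1) => fun a => wedge θ (wpow1 θ k) (fun i => a (Fin.cast (by omega) i))

/-- The Chern character form `ch_p(∇) = Tr_*((R^∇)^{∧p})`. -/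
noncomputable def chp {L E : Type*} (C : Type*) [LieRing L] [LieAlgebra ℝ L]
    [CommRing C] [AddCommGroup E] [Module ℝ E] [Module C E]
    (D : L →ₗ[ℝ] Module.End ℝ E) (p : ℕ) : (Fin (2 * p) → L) → C :=
  fun a => trR C (wpow (curv2 D) p a)

/-- `∫₀ˢ f(t) dt` for a function `f : ℝ → C` given by a polynomial with
coefficients in the ℝ-algebra `C` (and `0` if `f` is not polynomial). -/
noncomputable def intPolyTo {C : Type*} [CommRing C] [Algebra ℝ C] (s : ℝ) (f : ℝ → C) : C :=
  letI := Classical.propDecidable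
  if h : ∃ P : Polynomial C, ∀ t : ℝ, f t = Polynomial.eval (algebraMap ℝ C t) P then
    ∑ k ∈ Finset.range (h.choose.natDegree + 1),
      (s ^ (k + 1) / ((k : ℝ) + 1)) • h.choose.coeff k
  else 0

/-- The valuewise integral over the standard 2-simplex
`Δ² = {(t₁,t₂) : t₁ ≥ 0, t₂ ≥ 0, t₁ + t₂ ≤ 1}` of a `C`-valued polynomial function. -/
noncomputable def intSimplex2 {C : Type*} [CommRing C] [Algebra ℝ C] (f : ℝ → ℝ → C) : C :=
  intPolyTo 1 (fun t1 => intPolyTo (1 - t1) (fun t2 => f t1 t2))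

/-- The Chern–Simons transgression form for a pair of ℝ-linear connections:
`cs_p(∇⁰,∇¹) = p·∫₀¹ Tr_*(λ ∧ (R_t)^{∧(p−1)}) dt` where `λ = ∇¹ − ∇⁰` and
`R_t` is the curvature of `∇⁰ + t•λ`. -/
noncomputable def csPair {L E : Type*} (C : Type*) [LieRing L] [LieAlgebra ℝ L]
    [CommRing C] [Algebra ℝ C] [AddCommGroup E] [Module ℝ E] [Module C E]
    (D0 D1 : L →ₗ[ℝ] Module.End ℝ E) (p : ℕ) : (Fin (2 * (p - 1) + 1) → L) → C :=
  fun a => (p : ℝ) • intPolyTo 1 (fun t =>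
    trR C (wedge (fun v : Fin 1 → L => (D1 - D0) (v 0))
      (wpow (curv2 (D0 + t • (D1 - D0))) (p - 1))
      (fun i => a (Fin.cast (by omega) i))))

/-- The Chern–Simons transgression form for a triple of ℝ-linear connections:
`cs_p(∇⁰,∇¹,∇²) = −p(p−1)·∫_{Δ²} Tr_*(λ₁ ∧ λ₂ ∧ (R_{(t₁,t₂)})^{∧(p−2)}) dt₁dt₂`
where `λᵢ = ∇ⁱ − ∇⁰` and `R_{(t₁,t₂)}` is the curvature of `∇⁰ + t₁•λ₁ + t₂•λ₂`. -/
noncomputable def csTriple {L E : Type*} (C : Type*) [LieRing L] [LieAlgebra ℝ L]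
    [CommRing C] [Algebra ℝ C] [AddCommGroup E] [Module ℝ E] [Module C E]
    (D0 D1 D2 : L →ₗ[ℝ] Module.End ℝ E) (p : ℕ) : (Fin (2 * (p - 2) + 2) → L) → C :=
  fun a => (-((p : ℝ) * ((p : ℝ) - 1))) • intSimplex2 (fun t1 t2 =>
    trR C (wedge (fun v : Fin 1 → L => (D1 - D0) (v 0))
      (wedge (fun v : Fin 1 → L => (D2 - D0) (v 0))
        (wpow (curv2 (D0 + t1 • (D1 - D0) + t2 • (D2 - D0))) (p - 2)))
      (fun i => a (Fin.cast (by omega) i))))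

/-!
Forms on `L` are encoded as functions on words in `L`. Contraction with `a` removes the first
letter, and a form is determined by its value on the empty word and its contractions, so that
Cartan's formula `ι_a d + d ι_a = L_a` and the Leibniz rule for `ι_a` can serve as definitions of
`d` and of the wedge product; all identities then follow by induction on words.

A flat `∇` turns `[∇, ·]` into an action of `L` on `End_C E` by derivations, for which the trace is
equivariant, and every connection is `∇ + α` with curvature `R = dα + α ∧ α`. Along a path of
connections, `Tr (α' ∧ R^n)` is a primitive of `(Tr R^(n+1))' / (n+1)`; along a surface, with
partial derivatives `β` and `γ` of `α`, a primitive of the curl of these transgressions is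
`∑ Tr (β ∧ R^i ∧ γ ∧ R^j)`. Integrating the latter shows that
`cs(∇, ∇^h) + cs(∇^h, ∇_m) - cs(∇, ∇_m)` is exact. Taking adjoints is a trace-preserving
anti-automorphism, which exchanges `∇` with `∇^h`, fixes `∇_m` and sends the curvature of a
connection to minus that of its adjoint. Since `p` is odd, this gives `Tr R_m^p = -Tr R_m^p`,
whence `cs(∇, ∇_m)` is closed, and `cs(∇^h, ∇_m) = -cs(∇, ∇_m)`, whence the exactness.
-/

/-- Forms on `L` with values in `B`, neither multilinear nor alternating nor homogeneous:
functions on words in `L`. Contraction shortens words, so that products and differentials can be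
defined, and their identities proved, by recursion on words. -/
def WordForm (L B : Type*) := List L → B

namespace WordForm

section Basic

variable {L B B' : Type*} [AddCommGroup B] [AddCommGroup B']

instance : AddCommGroup (WordForm L B) :=
  inferInstanceAs (AddCommGroup (List L → B))

@[simp] theorem zero_apply (l : List L) : (0 : WordForm L B) l = 0 := rfl

@[simp] theorem add_apply (x y : WordForm L B) (l : List L) : (x + y) l = x l + y l := rfl

@[simp] theorem sub_apply (x y : WordForm L B) (l : List L) : (x - y) l = x l - y l := rfl

@[simp] theorem neg_apply (x : WordForm L B) (l : List L) : (-x) l = -x l := rfl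

@[simp] theorem nsmul_apply (n : ℕ) (x : WordForm L B) (l : List L) : (n • x) l = n • x l := rfl

/-- The value of a form on a fixed word, as a homomorphism. -/
def eval (l : List L) : WordForm L B →+ B :=
  Pi.evalAddMonoidHom (fun _ : List L => B) l

/-- The homomorphism into forms with prescribed values on words. -/
def lift (f : List L → B →+ B') : B →+ WordForm L B' :=
  AddMonoidHom.pi f

/-- The contraction `ι_a`, insertion of `a` as first argument. -/
def contract (a : L) : WordForm L B →+ WordForm L B :=
  lift fun l => eval (a :: l)

theorem contract_apply (a : L) (x : WordForm L B) (l : List L) : contract a x l = x (a :: l) := rfl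

theorem ext_contract {x y : WordForm L B} (nil : x [] = y [])
    (cons : ∀ a, contract a x = contract a y) : x = y := by
  funext l
  cases l with
  | nil => exact nil
  | cons a l => exact congrFun (cons a) l

/-- The parity automorphism, `(-1)ⁿ` in degree `n`. -/
def involute : WordForm L B →+ WordForm L B :=
  lift fun l => (-1 : ℤ) ^ l.length • eval l

theorem involute_apply (x : WordForm L B) (l : List L) :
    involute x l = (-1 : ℤ) ^ l.length • x l := rfl

@[simp] theorem involute_nil (x : WordForm L B) : involute x [] = x [] := by
  simp [involute_apply]

theorem contract_involute (a : L) (x : WordForm L B) :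
    contract a (involute x) = -involute (contract a x) := by
  funext l
  simp [contract_apply, involute_apply, pow_succ]

@[simp] theorem involute_involute (x : WordForm L B) : involute (involute x) = x := by
  funext l
  simp [involute_apply, smul_smul, ← mul_pow]

theorem involute_contract_of_even {x : WordForm L B} (hx : involute x = x) (a : L) :
    involute (contract a x) = -contract a x := by
  rw [← neg_eq_iff_eq_neg, ← contract_involute, hx]

theorem involute_contract_of_odd {x : WordForm L B} (hx : involute x = -x) (a : L) :
    involute (contract a x) = contract a x := by
  rw [← neg_inj, ← contract_involute, hx, map_neg]

/-- The form of degree zero with value `c`. -/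
def const : B →+ WordForm L B :=
  lift fun
    | [] => AddMonoidHom.id B
    | _ :: _ => 0

@[simp] theorem const_nil (c : B) : const (L := L) c [] = c := rfl

@[simp] theorem contract_const (a : L) (c : B) : contract a (const c) = 0 := rfl

@[simp] theorem involute_const (c : B) : involute (const (L := L) c) = const c :=
  ext_contract (by simp) fun a => by simp [contract_involute]

/-- The form of degree one given by a function on `L`. -/
def oneForm (α : L → B) : WordForm L B
  | [] => 0
  | a :: l => const (α a) l

@[simp] theorem oneForm_nil (α : L → B) : oneForm α [] = 0 := rfl

@[simp] theorem contract_oneForm (a : L) (α : L → B) : contract a (oneForm α) = const (α a) := rfl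

@[simp] theorem involute_oneForm (α : L → B) : involute (oneForm α) = -oneForm α :=
  ext_contract (by simp) fun a => by simp [contract_involute]

theorem oneForm_add (α β : L → B) : oneForm (α + β) = oneForm α + oneForm β :=
  ext_contract (by simp) fun a => by simp

theorem oneForm_sub (α β : L → B) : oneForm (α - β) = oneForm α - oneForm β :=
  ext_contract (by simp) fun a => by simp

theorem oneForm_neg (α : L → B) : oneForm (-α) = -oneForm α :=
  ext_contract (by simp) fun a => by simp

@[simp] theorem oneForm_zero : oneForm (0 : L → B) = 0 :=
  ext_contract (by simp) fun a => by simp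

end Basic

section Map

variable {L B B' B'' F G : Type*} [AddCommGroup B] [AddCommGroup B'] [AddCommGroup B'']
  [FunLike F B B'] [AddMonoidHomClass F B B'] [FunLike G B' B''] [AddMonoidHomClass G B' B'']

/-- The action of an additive map on the values of forms. -/
def map (f : F) : WordForm L B →+ WordForm L B' :=
  lift fun l => (f : B →+ B').comp (eval l)

@[simp] theorem map_apply (f : F) (x : WordForm L B) (l : List L) : map f x l = f (x l) := rfl

theorem contract_map (f : F) (a : L) (x : WordForm L B) :
    contract a (map f x) = map f (contract a x) := rfl

theorem involute_map (f : F) (x : WordForm L B) : involute (map f x) = map f (involute x) := by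
  funext l
  simp [involute_apply]

theorem map_const (f : F) (c : B) : map f (const (L := L) c) = const (f c) :=
  ext_contract rfl fun a => by simp [contract_map]

theorem map_oneForm (f : F) (α : L → B) : map f (oneForm α) = oneForm (f ∘ α) :=
  ext_contract (by simp) fun a => by simp [contract_map, map_const]

theorem map_map_of_comp_eq {K : Type*} [FunLike K B B''] [AddMonoidHomClass K B B''] (g : G) (f : F)
    (k : K) (h : ∀ c, g (f c) = k c) (x : WordForm L B) : map g (map f x) = map k x :=
  funext fun l => h (x l)

end Map

section Shuffle

variable {L B : Type*} [Ring B]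

/-- The values of the signed shuffle product; the recursion makes contraction a graded
derivation. -/
def shuffle : List L → WordForm L B →+ WordForm L B →+ B
  | [] => ((AddMonoidHom.mul : B →+ B →+ B).compl₂ (eval [])).comp (eval [])
  | a :: l => (shuffle l).comp (contract a) + ((shuffle l).compl₂ (contract a)).comp involute

instance : Mul (WordForm L B) := ⟨fun x y l => shuffle l x y⟩

instance : One (WordForm L B) := ⟨const 1⟩

@[simp] theorem mul_nil (x y : WordForm L B) : (x * y) [] = x [] * y [] := rfl

theorem contract_mul (a : L) (x y : WordForm L B) :
    contract a (x * y) = contract a x * y + involute x * contract a y := rfl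

theorem mul_cons (a : L) (l : List L) (x y : WordForm L B) :
    (x * y) (a :: l) = (contract a x * y) l + (involute x * contract a y) l := rfl

theorem one_def : (1 : WordForm L B) = const 1 := rfl

instance : NonUnitalNonAssocRing (WordForm L B) where
  left_distrib x y z := funext fun l => map_add (shuffle l x) y z
  right_distrib x y z := funext fun l => DFunLike.congr_fun (map_add (shuffle l) x y) z
  zero_mul x := funext fun l => DFunLike.congr_fun (map_zero (shuffle l)) x
  mul_zero x := funext fun l => map_zero (shuffle l x)

theorem involute_mul (x y : WordForm L B) : involute (x * y) = involute x * involute y := by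
  funext l
  induction l generalizing x y with
  | nil => simp
  | cons a l ih =>
    rw [← contract_apply a (involute (x * y)), contract_involute, contract_mul, mul_cons,
      contract_involute, contract_involute, map_add, neg_apply, add_apply, ih, ih, neg_mul, mul_neg,
      neg_add]
    rfl

theorem const_mul_apply (c : B) (x : WordForm L B) (l : List L) :
    (const c * x : WordForm L B) l = c * x l := by
  induction l generalizing x with
  | nil => simp
  | cons a l ih => simp [mul_cons, ih, contract_apply]

theorem mul_const_apply (c : B) (x : WordForm L B) (l : List L) :
    (x * const c : WordForm L B) l = x l * c := by
  induction l generalizing x with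
  | nil => simp
  | cons a l ih => simp [mul_cons, ih, contract_apply]

protected theorem mul_assoc (x y z : WordForm L B) : x * y * z = x * (y * z) := by
  funext l
  induction l generalizing x y z with
  | nil => simp [_root_.mul_assoc]
  | cons a l ih =>
    simp only [mul_cons, contract_mul, add_mul, mul_add, add_apply, ih, involute_mul, add_assoc]

instance : Ring (WordForm L B) where
  mul_assoc := WordForm.mul_assoc
  one_mul x := funext fun l => by rw [one_def, const_mul_apply, one_mul]
  mul_one x := funext fun l => by rw [one_def, mul_const_apply, mul_one]
  __ := (inferInstance : NonUnitalNonAssocRing (WordForm L B))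

theorem involute_pow_of_even {x : WordForm L B} (hx : involute x = x) (n : ℕ) :
    involute (x ^ n) = x ^ n := by
  induction n with
  | zero => rw [pow_zero, one_def, involute_const]
  | succ n ih => rw [pow_succ, involute_mul, ih, hx]

end Shuffle

section MapMul

variable {L B B' : Type*} [Ring B] [Ring B']

theorem map_mul_of_leibniz {F : Type*} [FunLike F B B] [AddMonoidHomClass F B B] {f : F}
    (hf : ∀ b c, f (b * c) = f b * c + b * f c) (x y : WordForm L B) :
    map f (x * y) = map f x * y + x * map f y := by
  funext l
  induction l generalizing x y with
  | nil => simp [hf]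
  | cons a l ih =>
    rw [← contract_apply a (map f (x * y)), contract_map, contract_mul, map_add, add_apply, ih, ih]
    simp only [add_apply, mul_cons, contract_map, involute_map]
    abel

variable {F : Type*} [FunLike F B B'] [RingHomClass F B B']

theorem map_mul (f : F) (x y : WordForm L B) : map f (x * y) = map f x * map f y := by
  funext l
  induction l generalizing x y with
  | nil => simp
  | cons a l ih =>
    rw [← contract_apply a (map f (x * y)), contract_map, contract_mul, map_add, add_apply, ih, ih]
    simp only [mul_cons, contract_map, involute_map]

theorem map_pow (f : F) (x : WordForm L B) (n : ℕ) : map f (x ^ n) = map f x ^ n := by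
  induction n with
  | zero => rw [pow_zero, pow_zero, one_def, map_const, map_one, one_def]
  | succ n ih => rw [pow_succ, pow_succ, map_mul, ih]

end MapMul

section Reversal

variable {L B B' V : Type*} [Ring B] [Ring B'] [AddCommGroup V] {f : B →+ V} {g : B' →+ V}
  {φ : B →+ B'}

theorem map_mul_rev_apply (h : ∀ b c, f (b * c) = g (φ c * φ b)) (l : List L)
    (x y : WordForm L B) :
    (involute x = x → map f (x * y) l = map g (map φ y * map φ x) l) ∧
      (involute x = -x → map f (x * y) l = map g (map φ (involute y) * map φ x) l) := by
  induction l generalizing x y with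
  | nil => simp [h]
  | cons a l ih =>
    simp only [← contract_apply, contract_map, contract_mul, map_add, add_apply]
    constructor
    · intro hx
      rw [(ih _ _).2 (involute_contract_of_even hx a), hx, (ih _ _).1 hx, involute_map, add_comm]
    · intro hx
      rw [(ih _ _).1 (involute_contract_of_odd hx a), hx, neg_mul, map_neg, neg_apply,
        (ih _ _).2 hx, contract_involute, involute_map, involute_involute, map_neg, neg_mul,
        map_neg, neg_apply, add_comm]

theorem map_mul_rev_of_even (h : ∀ b c, f (b * c) = g (φ c * φ b)) {x : WordForm L B}
    (hx : involute x = x) (y : WordForm L B) : map f (x * y) = map g (map φ y * map φ x) :=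
  funext fun l => (map_mul_rev_apply h l x y).1 hx

theorem map_mul_comm_of_even (h : ∀ b c, f (b * c) = f (c * b)) {x : WordForm L B}
    (hx : involute x = x) (y : WordForm L B) : map f (x * y) = map f (y * x) :=
  map_mul_rev_of_even (φ := AddMonoidHom.id B) h hx y

theorem map_mul_comm_of_odd (h : ∀ b c, f (b * c) = f (c * b)) {x : WordForm L B}
    (hx : involute x = -x) (y : WordForm L B) : map f (x * y) = map f (involute y * x) :=
  funext fun l => (map_mul_rev_apply (φ := AddMonoidHom.id B) h l x y).2 hx

end Reversal

end WordForm

namespace WordForm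

section Differential

variable {R L B B' : Type*} [CommRing R] [LieRing L] [LieAlgebra R L]

section Module

variable [AddCommGroup B] [Module R B] [AddCommGroup B'] [Module R B']

/-- The values of the Lie derivative, by the recursion `ι_b 𝓛_a = 𝓛_a ι_b - ι_{[a,b]}`. -/
def lieDerivAt (act : L →ₗ[R] Module.End R B) (a : L) : List L → WordForm L B →+ B
  | [] => (act a).toAddMonoidHom.comp (eval [])
  | b :: l => (lieDerivAt act a l).comp (contract b) - eval (⁅a, b⁆ :: l)

/-- The Lie derivative `𝓛_a` on forms with values in a representation of `L`. -/
def lieDeriv (act : L →ₗ[R] Module.End R B) (a : L) : WordForm L B →+ WordForm L B :=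
  lift (lieDerivAt act a)

/-- The values of the Chevalley–Eilenberg differential, by Cartan's formula
`ι_a d = 𝓛_a - d ι_a`. -/
def diffAt (act : L →ₗ[R] Module.End R B) : List L → WordForm L B →+ B
  | [] => 0
  | a :: l => (eval l).comp (lieDeriv act a) - (diffAt act l).comp (contract a)

/-- The Chevalley–Eilenberg differential on forms with values in a representation of `L`. -/
def diff (act : L →ₗ[R] Module.End R B) : WordForm L B →+ WordForm L B :=
  lift (diffAt act)

variable (act : L →ₗ[R] Module.End R B)

@[simp] theorem lieDeriv_nil (a : L) (x : WordForm L B) : lieDeriv act a x [] = act a (x []) := rfl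

theorem contract_lieDeriv (a b : L) (x : WordForm L B) :
    contract b (lieDeriv act a x) = lieDeriv act a (contract b x) - contract ⁅a, b⁆ x := rfl

theorem lieDeriv_cons (a b : L) (l : List L) (x : WordForm L B) :
    lieDeriv act a x (b :: l) = lieDeriv act a (contract b x) l - contract ⁅a, b⁆ x l := rfl

@[simp] theorem diff_nil (x : WordForm L B) : diff act x [] = 0 := rfl

theorem contract_diff (a : L) (x : WordForm L B) :
    contract a (diff act x) = lieDeriv act a x - diff act (contract a x) := rfl

theorem diff_cons (a : L) (l : List L) (x : WordForm L B) :
    diff act x (a :: l) = lieDeriv act a x l - diff act (contract a x) l := rfl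

theorem lieDeriv_involute (a : L) (x : WordForm L B) :
    lieDeriv act a (involute x) = involute (lieDeriv act a x) := by
  funext l
  induction l generalizing x with
  | nil => simp
  | cons b l ih =>
    rw [← contract_apply b (involute _), contract_involute, contract_lieDeriv, lieDeriv_cons,
      contract_involute, contract_involute, map_neg, neg_apply, ih]
    simp only [map_sub, neg_apply, sub_apply]
    abel

theorem diff_involute (x : WordForm L B) : diff act (involute x) = -involute (diff act x) := by
  funext l
  induction l generalizing x with
  | nil => simp
  | cons b l ih =>
    rw [← contract_apply b (-involute _), map_neg, contract_involute, contract_diff, diff_cons,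
      contract_involute, map_neg, neg_apply, ih, lieDeriv_involute]
    simp only [map_sub, neg_apply, sub_apply]
    abel

section Map

variable {F : Type*} [FunLike F B B'] [AddMonoidHomClass F B B'] {f : F}
  {act' : L →ₗ[R] Module.End R B'}

theorem map_lieDeriv (h : ∀ a c, f (act a c) = act' a (f c)) (a : L) (x : WordForm L B) :
    map f (lieDeriv act a x) = lieDeriv act' a (map f x) := by
  funext l
  induction l generalizing x with
  | nil => simp [h]
  | cons b l ih => rw [lieDeriv_cons, contract_map, ← ih, map_apply, lieDeriv_cons, map_sub]; rfl

theorem map_diff (h : ∀ a c, f (act a c) = act' a (f c)) (x : WordForm L B) :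
    map f (diff act x) = diff act' (map f x) := by
  funext l
  induction l generalizing x with
  | nil => simp
  | cons a l ih =>
    rw [diff_cons, contract_map, ← ih, ← map_lieDeriv act h, map_apply, diff_cons, map_sub]
    rfl

end Map

theorem lieDeriv_const (a : L) (c : B) : lieDeriv act a (const c) = const (act a c) :=
  ext_contract rfl fun b => by simp [contract_lieDeriv]

theorem diff_const (c : B) : diff act (const c) = oneForm fun a => act a c :=
  ext_contract rfl fun a => by simp [contract_diff, lieDeriv_const]

theorem lieDeriv_oneForm (a : L) (α : L → B) :
    lieDeriv act a (oneForm α) = oneForm fun b => act a (α b) - α ⁅a, b⁆ :=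
  ext_contract (by simp) fun b => by simp [contract_lieDeriv, lieDeriv_const]

theorem contract_diff_oneForm (a : L) (α : L → B) :
    contract a (diff act (oneForm α)) =
      oneForm fun b => act a (α b) - α ⁅a, b⁆ - act b (α a) := by
  rw [contract_diff, lieDeriv_oneForm, contract_oneForm, diff_const, ← oneForm_sub]
  rfl

theorem diff_diff_oneForm (hact : ∀ a b, act ⁅a, b⁆ = ⁅act a, act b⁆) (α : L →+ B) :
    diff act (diff act (oneForm α)) = 0 := by
  refine ext_contract rfl fun a => ext_contract ?_ fun b => ext_contract ?_ fun c => ?_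
  · simp [contract_diff]
  · simp [contract_diff, contract_lieDeriv]
  · simp only [contract_diff act _ (diff _ _), contract_diff_oneForm, map_sub, contract_lieDeriv,
      lieDeriv_oneForm, contract_oneForm, hact, Ring.lie_def, Module.End.mul_apply,
      LinearMap.sub_apply, lie_lie, map_zero]
    rw [leibniz_lie a b c, map_add, map_add]
    abel

end Module

section Ring

variable [Ring B] [Algebra R B] {act : L →ₗ[R] Module.End R B}

theorem lieDeriv_mul (hact : ∀ a b c, act a (b * c) = act a b * c + b * act a c) (a : L)
    (x y : WordForm L B) :
    lieDeriv act a (x * y) = lieDeriv act a x * y + x * lieDeriv act a y := by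
  funext l
  induction l generalizing x y with
  | nil => simp [hact]
  | cons b l ih =>
    simp only [lieDeriv_cons, contract_mul, map_add, ih, add_apply, mul_cons, lieDeriv_involute,
      contract_lieDeriv, sub_apply, sub_mul, mul_sub]
    abel

theorem diff_mul (hact : ∀ a b c, act a (b * c) = act a b * c + b * act a c)
    (x y : WordForm L B) :
    diff act (x * y) = diff act x * y + involute x * diff act y := by
  funext l
  induction l generalizing x y with
  | nil => simp
  | cons b l ih =>
    simp only [diff_cons, contract_mul, map_add, ih, add_apply, mul_cons, lieDeriv_mul hact,
      contract_diff, sub_apply, sub_mul, mul_sub, contract_involute, neg_mul, diff_involute,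
      neg_apply, involute_involute]
    abel

end Ring

end Differential

end WordForm

section PowDeriv

variable {A : Type*} [Ring A]

/-- The derivative at `r`, in the direction `w`, of the `n`-th power map of a noncommutative
ring. -/
def powDeriv (r : A) (n : ℕ) (w : A) : A :=
  ∑ i ∈ Finset.range n, r ^ i * w * r ^ (n - 1 - i)

theorem powDeriv_zero (r w : A) : powDeriv r 0 w = 0 :=
  Finset.sum_range_zero _

theorem powDeriv_succ (r : A) (n : ℕ) (w : A) :
    powDeriv r (n + 1) w = powDeriv r n w * r + r ^ n * w := by
  rw [powDeriv, powDeriv, Finset.sum_range_succ, Finset.sum_mul, add_tsub_cancel_right,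
    Nat.sub_self, pow_zero, mul_one]
  congr 1
  refine Finset.sum_congr rfl fun i hi => ?_
  rw [mul_assoc _ _ r, ← pow_succ, show n - 1 - i + 1 = n - i by grind]

theorem map_pow_of_leibniz {f : A →+ A} (hf : ∀ x y, f (x * y) = f x * y + x * f y) (r : A)
    (n : ℕ) : f (r ^ n) = powDeriv r n (f r) := by
  induction n with
  | zero => simpa [powDeriv_zero] using hf 1 1
  | succ n ih => rw [powDeriv_succ, pow_succ, hf, ih]

end PowDeriv

/-- An action of the Lie algebra `L` by derivations on an algebra `A`, such as the action of
`∇_a` on `End E` by commutators for a flat connection `∇`, together with an equivariant trace. -/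
structure TracedAction (R L A M : Type*) [CommRing R] [LieRing L] [LieAlgebra R L] [Ring A]
    [Algebra R A] [AddCommGroup M] [Module R M] where
  act : L →ₗ[R] Module.End R A
  actM : L →ₗ[R] Module.End R M
  tr : A →ₗ[R] M
  act_lie : ∀ a b, act ⁅a, b⁆ = ⁅act a, act b⁆
  act_mul : ∀ a x y, act a (x * y) = act a x * y + x * act a y
  tr_mul_comm : ∀ x y, tr (x * y) = tr (y * x)
  tr_act : ∀ a x, tr (act a x) = actM a (tr x)

namespace TracedAction

open WordForm

variable {R L A M : Type*} [CommRing R] [LieRing L] [LieAlgebra R L] [Ring A] [Algebra R A]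
  [AddCommGroup M] [Module R M] (T : TracedAction R L A M)

section Curvature

/-- The curvature form of the connection `∇ + α`, where `∇` is the flat connection inducing the
action. -/
def curvature (α : L →ₗ[R] A) : WordForm L A :=
  diff T.act (oneForm α) + oneForm α * oneForm α

/-- The exterior covariant derivative `x ↦ dx + α ∧ x - (-1)^{|x|} x ∧ α` of the connection
`∇ + α`. -/
def covDiff (α : L →ₗ[R] A) : WordForm L A →+ WordForm L A :=
  diff T.act + AddMonoidHom.mulLeft (oneForm α) -
    (AddMonoidHom.mulRight (oneForm α)).comp involute

theorem covDiff_apply (α : L →ₗ[R] A) (x : WordForm L A) :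
    T.covDiff α x = diff T.act x + oneForm α * x - involute x * oneForm α := rfl

theorem involute_diff_oneForm (α : L → A) :
    involute (diff T.act (oneForm α)) = diff T.act (oneForm α) := by
  rw [← neg_inj, ← diff_involute, involute_oneForm, map_neg]

theorem involute_curvature (α : L →ₗ[R] A) : involute (T.curvature α) = T.curvature α := by
  rw [curvature, map_add, involute_diff_oneForm, involute_mul, involute_oneForm, neg_mul_neg]

theorem curvature_zero : T.curvature 0 = 0 := by
  have h : oneForm ⇑(0 : L →ₗ[R] A) = 0 := oneForm_zero
  rw [curvature, h, map_zero, mul_zero, add_zero]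

theorem covDiff_mul (α : L →ₗ[R] A) (x y : WordForm L A) :
    T.covDiff α (x * y) = T.covDiff α x * y + involute x * T.covDiff α y := by
  simp only [covDiff_apply, diff_mul T.act_mul, involute_mul]
  noncomm_ring

theorem covDiff_curvature (α : L →ₗ[R] A) : T.covDiff α (T.curvature α) = 0 := by
  have hα : diff T.act (diff T.act (oneForm α)) = 0 :=
    diff_diff_oneForm T.act T.act_lie α.toAddMonoidHom
  rw [covDiff_apply, involute_curvature]
  simp only [curvature, map_add, diff_mul T.act_mul, hα, involute_oneForm]
  noncomm_ring

theorem covDiff_curvature_pow (α : L →ₗ[R] A) (n : ℕ) : T.covDiff α (T.curvature α ^ n) = 0 := by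
  induction n with
  | zero =>
    have h := T.covDiff_mul α 1 1
    rwa [one_def, involute_const, ← one_def, mul_one, mul_one, one_mul, left_eq_add] at h
  | succ n ih => rw [pow_succ, covDiff_mul, ih, covDiff_curvature, zero_mul, mul_zero, add_zero]

theorem covDiff_powDeriv_curvature (α : L →ₗ[R] A) (n : ℕ) (w : WordForm L A) :
    T.covDiff α (powDeriv (T.curvature α) n w) =
      powDeriv (T.curvature α) n (T.covDiff α w) := by
  induction n with
  | zero => rw [powDeriv_zero, powDeriv_zero, map_zero]
  | succ n ih =>
    rw [powDeriv_succ, powDeriv_succ, map_add, covDiff_mul, covDiff_mul, ih, covDiff_curvature,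
      covDiff_curvature_pow, involute_pow_of_even (T.involute_curvature α), mul_zero, add_zero,
      zero_mul, zero_add]

theorem involute_covDiff_oneForm (α β : L →ₗ[R] A) :
    involute (T.covDiff α (oneForm β)) = T.covDiff α (oneForm β) := by
  simp only [covDiff_apply, map_sub, map_add, involute_diff_oneForm, involute_mul, involute_oneForm,
    map_neg, neg_neg, neg_mul, mul_neg]

end Curvature

section Trace

theorem map_tr_mul_comm_of_even {x : WordForm L A} (hx : involute x = x) (y : WordForm L A) :
    map T.tr (x * y) = map T.tr (y * x) :=
  map_mul_comm_of_even (f := T.tr.toAddMonoidHom) T.tr_mul_comm hx y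

theorem diff_map_tr (α : L →ₗ[R] A) (x : WordForm L A) :
    diff T.actM (map T.tr x) = map T.tr (T.covDiff α x) := by
  have h : map T.tr (oneForm α * x) = map T.tr (involute x * oneForm α) :=
    map_mul_comm_of_odd (f := T.tr.toAddMonoidHom) T.tr_mul_comm (involute_oneForm α) x
  rw [covDiff_apply, map_sub, map_add, h, add_sub_cancel_right, map_diff T.act T.tr_act]

theorem map_tr_mul_powDeriv {r x : WordForm L A} (hr : involute r = r) (hx : involute x = x)
    (n : ℕ) (y : WordForm L A) :
    map T.tr (x * powDeriv r n y) = map T.tr (y * powDeriv r n x) := by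
  rw [powDeriv, powDeriv, Finset.mul_sum, Finset.mul_sum, map_sum, map_sum,
    ← Finset.sum_range_reflect]
  refine Finset.sum_congr rfl fun i hi => ?_
  have hxr : involute (x * r ^ (n - 1 - i)) = x * r ^ (n - 1 - i) := by
    rw [involute_mul, hx, involute_pow_of_even hr]
  rw [show n - 1 - (n - 1 - i) = i by grind]
  simpa only [mul_assoc] using T.map_tr_mul_comm_of_even hxr (y * r ^ i)

theorem map_tr_powDeriv {r : WordForm L A} (hr : involute r = r) (n : ℕ) (w : WordForm L A) :
    map T.tr (powDeriv r (n + 1) w) = (n + 1) • map T.tr (w * r ^ n) := by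
  rw [powDeriv, map_sum, Finset.sum_eq_card_nsmul (b := map T.tr (w * r ^ n)), Finset.card_range]
  intro i hi
  rw [mul_assoc, T.map_tr_mul_comm_of_even (involute_pow_of_even hr i), mul_assoc, ← pow_add,
    show n + 1 - 1 - i + i = n by grind]

end Trace

section Transgression

/-- The Chern character form `Tr Rⁿ` of the connection `∇ + α` with curvature `R`. -/
def chernForm (α : L →ₗ[R] A) (n : ℕ) : WordForm L M :=
  map T.tr (T.curvature α ^ n)

/-- The form `Tr (β ∧ Rⁿ)`, for `R` the curvature of `∇ + α`: up to the factor `n + 1`, a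
primitive of the derivative of `Tr Rⁿ⁺¹` in the direction `β`. -/
def transgression (α β : L →ₗ[R] A) (n : ℕ) : WordForm L M :=
  map T.tr (oneForm β * T.curvature α ^ n)

/-- The form `∑_{i+j=n-1} Tr (β ∧ Rⁱ ∧ γ ∧ Rʲ)`, for `R` the curvature of `∇ + α`: a primitive of
the curl of the transgression along a surface of connections with tangent directions `β`, `γ`. -/
def transgression₂ (α β γ : L →ₗ[R] A) (n : ℕ) : WordForm L M :=
  map T.tr (oneForm β * powDeriv (T.curvature α) n (oneForm γ))

theorem transgression_neg (α β : L →ₗ[R] A) (n : ℕ) :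
    T.transgression α (-β) n = -T.transgression α β n := by
  have h : oneForm ⇑(-β) = -oneForm β := oneForm_neg β
  rw [transgression, h, neg_mul, map_neg, transgression]

theorem transgression_zero (α : L →ₗ[R] A) (n : ℕ) : T.transgression α 0 n = 0 := by
  have h : oneForm ⇑(0 : L →ₗ[R] A) = 0 := oneForm_zero
  rw [transgression, h, zero_mul, map_zero]

/-- Differentiation in a parameter on which the elements of `A` and `M` depend, but not the action
and the trace. -/
structure ParamDeriv where
  onA : Module.End R A
  onM : Module.End R M
  leibniz : ∀ x y, onA (x * y) = onA x * y + x * onA y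
  onA_act : ∀ a x, onA (T.act a x) = T.act a (onA x)
  onM_tr : ∀ x, onM (T.tr x) = T.tr (onA x)

variable {T}

theorem ParamDeriv.map_curvature (δ : T.ParamDeriv) (α : L →ₗ[R] A) :
    map δ.onA (T.curvature α) = T.covDiff α (oneForm (δ.onA ∘ₗ α)) := by
  rw [curvature, map_add, map_mul_of_leibniz δ.leibniz, map_diff T.act δ.onA_act, map_oneForm,
    covDiff_apply, involute_oneForm, neg_mul, sub_neg_eq_add, add_right_comm, add_assoc]
  rfl

theorem ParamDeriv.map_curvature_pow (δ : T.ParamDeriv) (α : L →ₗ[R] A) (n : ℕ) :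
    map δ.onA (T.curvature α ^ n) =
      powDeriv (T.curvature α) n (T.covDiff α (oneForm (δ.onA ∘ₗ α))) := by
  rw [map_pow_of_leibniz (map_mul_of_leibniz δ.leibniz), δ.map_curvature]

theorem ParamDeriv.map_tr (δ : T.ParamDeriv) (x : WordForm L A) :
    map δ.onM (map T.tr x) = map T.tr (map δ.onA x) :=
  funext fun l => δ.onM_tr (x l)

theorem ParamDeriv.map_chernForm (δ : T.ParamDeriv) (α : L →ₗ[R] A) (n : ℕ) :
    map δ.onM (T.chernForm α (n + 1)) =
      (n + 1) • diff T.actM (T.transgression α (δ.onA ∘ₗ α) n) := by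
  rw [chernForm, δ.map_tr, δ.map_curvature_pow, T.map_tr_powDeriv (T.involute_curvature α),
    transgression, T.diff_map_tr α, covDiff_mul, covDiff_curvature_pow, mul_zero, add_zero]

theorem ParamDeriv.map_transgression (δ ε : T.ParamDeriv) (α : L →ₗ[R] A) (n : ℕ) :
    map δ.onM (T.transgression α (ε.onA ∘ₗ α) n) =
      map T.tr (oneForm (δ.onA ∘ₗ ε.onA ∘ₗ α) * T.curvature α ^ n +
        oneForm (ε.onA ∘ₗ α) *
          powDeriv (T.curvature α) n (T.covDiff α (oneForm (δ.onA ∘ₗ α)))) := by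
  rw [transgression, δ.map_tr, map_mul_of_leibniz δ.leibniz, δ.map_curvature_pow, map_oneForm]
  rfl

theorem diff_transgression₂ (δ ε : T.ParamDeriv) (hδε : Commute δ.onA ε.onA) (α : L →ₗ[R] A)
    (n : ℕ) :
    diff T.actM (T.transgression₂ α (δ.onA ∘ₗ α) (ε.onA ∘ₗ α) n) =
      map δ.onM (T.transgression α (ε.onA ∘ₗ α) n) -
        map ε.onM (T.transgression α (δ.onA ∘ₗ α) n) := by
  have hcomm : δ.onA ∘ₗ ε.onA ∘ₗ α = ε.onA ∘ₗ δ.onA ∘ₗ α :=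
    LinearMap.ext fun a => LinearMap.congr_fun hδε.eq (α a)
  rw [transgression₂, T.diff_map_tr α, covDiff_mul, covDiff_powDeriv_curvature, involute_oneForm,
    neg_mul, ← sub_eq_add_neg, map_sub,
    T.map_tr_mul_powDeriv (T.involute_curvature α) (T.involute_covDiff_oneForm _ _),
    δ.map_transgression ε, ε.map_transgression δ, hcomm, map_add, map_add, add_sub_add_left_eq_sub]

end Transgression

section Hom

variable {A' M' : Type*} [Ring A'] [Algebra R A'] [AddCommGroup M'] [Module R M']

/-- Morphisms of traced actions, such as the evaluation of families at a parameter value. -/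
structure Hom (T : TracedAction R L A M) (T' : TracedAction R L A' M') where
  onA : A →ₐ[R] A'
  onM : M →ₗ[R] M'
  onA_act : ∀ a x, onA (T.act a x) = T'.act a (onA x)
  onM_tr : ∀ x, onM (T.tr x) = T'.tr (onA x)

variable {T} {T' : TracedAction R L A' M'} (f : Hom T T')

theorem Hom.map_tr (x : WordForm L A) : map f.onM (map T.tr x) = map T'.tr (map f.onA x) :=
  funext fun l => f.onM_tr (x l)

theorem Hom.map_curvature (α : L →ₗ[R] A) :
    map f.onA (T.curvature α) = T'.curvature (f.onA.toLinearMap ∘ₗ α) := by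
  rw [curvature, map_add, WordForm.map_mul, map_diff T.act f.onA_act, map_oneForm]
  rfl

theorem Hom.map_chernForm (α : L →ₗ[R] A) (n : ℕ) :
    map f.onM (T.chernForm α n) = T'.chernForm (f.onA.toLinearMap ∘ₗ α) n := by
  rw [chernForm, f.map_tr, WordForm.map_pow, f.map_curvature, chernForm]

theorem Hom.map_transgression (α β : L →ₗ[R] A) (n : ℕ) :
    map f.onM (T.transgression α β n) =
      T'.transgression (f.onA.toLinearMap ∘ₗ α) (f.onA.toLinearMap ∘ₗ β) n := by
  rw [transgression, f.map_tr, WordForm.map_mul, WordForm.map_pow, f.map_curvature, map_oneForm]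
  rfl

end Hom

end TracedAction

namespace TracedAction

open WordForm TensorProduct

section BaseChange

variable {R L A M S : Type*} [CommRing R] [LieRing L] [LieAlgebra R L] [Ring A] [Algebra R A]
  [AddCommGroup M] [Module R M] [CommRing S] [Algebra R S]
  (T : TracedAction R L A M)

theorem lTensor_rTensor_comm {N N' Q Q' : Type*} [AddCommGroup N] [Module R N] [AddCommGroup N']
    [Module R N'] [AddCommGroup Q] [Module R Q] [AddCommGroup Q'] [Module R Q'] (f : N →ₗ[R] N')
    (g : Q →ₗ[R] Q') (x : N ⊗[R] Q) :
    g.lTensor N' (f.rTensor Q x) = f.rTensor Q' (g.lTensor N x) :=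
  (LinearMap.congr_fun (f.lTensor_comp_rTensor N g) x).trans
    (LinearMap.congr_fun (f.rTensor_comp_lTensor N g) x).symm

theorem lTensor_mul_of_leibniz {f : S →ₗ[R] S} (hf : ∀ p q, f (p * q) = f p * q + p * f q)
    (x y : A ⊗[R] S) :
    f.lTensor A (x * y) = f.lTensor A x * y + x * f.lTensor A y := by
  induction x with
  | zero => simp
  | add x x' hx hx' => rw [add_mul, map_add, hx, hx', map_add]; noncomm_ring
  | tmul x p =>
    induction y with
    | zero => simp
    | add y y' hy hy' => rw [mul_add, map_add, hy, hy', map_add]; noncomm_ring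
    | tmul y q => simp [hf, tmul_add]

theorem rTensor_mul_of_leibniz {f : A →ₗ[R] A} (hf : ∀ b c, f (b * c) = f b * c + b * f c)
    (x y : A ⊗[R] S) :
    f.rTensor S (x * y) = f.rTensor S x * y + x * f.rTensor S y := by
  induction x with
  | zero => simp
  | add x x' hx hx' => rw [add_mul, map_add, hx, hx', map_add]; noncomm_ring
  | tmul x p =>
    induction y with
    | zero => simp
    | add y y' hy hy' => rw [mul_add, map_add, hy, hy', map_add]; noncomm_ring
    | tmul y q => simp [hf, add_tmul]

theorem rTensor_mul_comm {f : A →ₗ[R] M} (hf : ∀ b c, f (b * c) = f (c * b)) (x y : A ⊗[R] S) :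
    f.rTensor S (x * y) = f.rTensor S (y * x) := by
  induction x with
  | zero => simp
  | add x x' hx hx' => rw [add_mul, mul_add, map_add, hx, hx', map_add]
  | tmul x p =>
    induction y with
    | zero => simp
    | add y y' hy hy' => rw [add_mul, mul_add, map_add, hy, hy', map_add]
    | tmul y q => simp [hf x y, mul_comm p q]

variable (S) in
theorem rTensor_comm {N N' Q Q' : Type*} [AddCommGroup N] [Module R N] [AddCommGroup N']
    [Module R N'] [AddCommGroup Q] [Module R Q] [AddCommGroup Q'] [Module R Q'] {f : N →ₗ[R] N'}
    {f' : Q →ₗ[R] Q'} {g : N →ₗ[R] Q} {g' : N' →ₗ[R] Q'} (h : ∀ x, g' (f x) = f' (g x))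
    (x : N ⊗[R] S) :
    g'.rTensor S (f.rTensor S x) = f'.rTensor S (g.rTensor S x) := by
  have hc : g' ∘ₗ f = f' ∘ₗ g := LinearMap.ext h
  rw [← LinearMap.rTensor_comp_apply, ← LinearMap.rTensor_comp_apply, hc]

variable (S) in
/-- The base change to `S`; for `S` a polynomial ring, its elements are polynomial families. -/
noncomputable def baseChange : TracedAction R L (A ⊗[R] S) (M ⊗[R] S) where
  act := LinearMap.rTensorHom S ∘ₗ T.act
  actM := LinearMap.rTensorHom S ∘ₗ T.actM
  tr := T.tr.rTensor S
  act_lie a b := by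
    simp only [LinearMap.comp_apply, T.act_lie, Ring.lie_def, map_sub, LinearMap.coe_rTensorHom,
      LinearMap.rTensor_mul]
  act_mul a := rTensor_mul_of_leibniz (T.act_mul a)
  tr_mul_comm := rTensor_mul_comm T.tr_mul_comm
  tr_act a := rTensor_comm S (T.tr_act a)

/-- A derivation of the parameter ring differentiates families. -/
noncomputable def paramDeriv (δ : Derivation R S S) : (T.baseChange S).ParamDeriv where
  onA := δ.toLinearMap.lTensor A
  onM := δ.toLinearMap.lTensor M
  leibniz := lTensor_mul_of_leibniz fun p q =>
    (δ.leibniz p q).trans (by rw [smul_eq_mul, smul_eq_mul, mul_comm q, add_comm]; rfl)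
  onA_act a := lTensor_rTensor_comm (T.act a) δ.toLinearMap
  onM_tr := lTensor_rTensor_comm T.tr δ.toLinearMap

/-- The map on families obtained by applying a linear functional to the parameters. -/
noncomputable def specialize (N : Type*) [AddCommGroup N] [Module R N] (φ : S →ₗ[R] R) :
    N ⊗[R] S →ₗ[R] N :=
  (TensorProduct.rid R N).toLinearMap ∘ₗ φ.lTensor N

@[simp] theorem specialize_tmul {N : Type*} [AddCommGroup N] [Module R N] (φ : S →ₗ[R] R) (x : N)
    (p : S) : specialize N φ (x ⊗ₜ p) = φ p • x := by
  simp [specialize]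

theorem specialize_rTensor {N N' : Type*} [AddCommGroup N] [Module R N] [AddCommGroup N']
    [Module R N'] (φ : S →ₗ[R] R) (f : N →ₗ[R] N') (x : N ⊗[R] S) :
    specialize N' φ (f.rTensor S x) = f (specialize N φ x) := by
  induction x with
  | zero => simp
  | add x x' hx hx' => simp only [map_add, hx, hx']
  | tmul x p => simp

theorem map_map_specialize {X N N' : Type*} [AddCommGroup N] [Module R N] [AddCommGroup N']
    [Module R N'] (φ : S →ₗ[R] R) (f : N →ₗ[R] N') (x : WordForm X (N ⊗[R] S)) :
    map f (map (specialize N φ) x) = map (specialize N' φ) (map (f.rTensor S) x) :=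
  funext fun l => (specialize_rTensor φ f (x l)).symm

theorem diff_map_specialize (φ : S →ₗ[R] R) (x : WordForm L (M ⊗[R] S)) :
    diff T.actM (map (specialize M φ) x) = map (specialize M φ) (diff (T.baseChange S).actM x) :=
  (map_diff _ (fun a => specialize_rTensor φ (T.actM a)) x).symm

/-- Evaluation of families at a point of the parameter space. -/
noncomputable def evaluation (φ : S →ₐ[R] R) : Hom (T.baseChange S) T where
  onA := (Algebra.TensorProduct.rid R R A).toAlgHom.comp
    (Algebra.TensorProduct.map (AlgHom.id R A) φ)
  onM := specialize M φ.toLinearMap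
  onA_act a := specialize_rTensor φ.toLinearMap (T.act a)
  onM_tr := specialize_rTensor φ.toLinearMap T.tr

theorem evaluation_onA_toLinearMap (φ : S →ₐ[R] R) :
    (T.evaluation φ).onA.toLinearMap = specialize A φ.toLinearMap := rfl

/-- The family `p • β` over the parameter ring `S`. -/
noncomputable def family (β : L →ₗ[R] A) (p : S) : L →ₗ[R] A ⊗[R] S :=
  (TensorProduct.mk R A S).flip p ∘ₗ β

theorem family_apply (β : L →ₗ[R] A) (p : S) (a : L) : family β p a = β a ⊗ₜ p := rfl

variable (S) in
/-- The inclusion of the constant families. -/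
noncomputable def constantFamilies : Hom T (T.baseChange S) where
  onA := Algebra.TensorProduct.includeLeft
  onM := (TensorProduct.mk R M S).flip 1
  onA_act a x := (LinearMap.rTensor_tmul S (T.act a) 1 x).symm
  onM_tr x := (LinearMap.rTensor_tmul S T.tr 1 x).symm

theorem curvature_family_one (β : L →ₗ[R] A) :
    (T.baseChange S).curvature (family β 1) = map (constantFamilies S T).onA (T.curvature β) :=
  ((constantFamilies S T).map_curvature β).symm

variable {T} in
/-- The base change to `S` of a parameter derivation, in the direction of the old parameter. -/
noncomputable def ParamDeriv.baseChange (S : Type*) [CommRing S] [Algebra R S] (ε : T.ParamDeriv) :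
    (T.baseChange S).ParamDeriv where
  onA := ε.onA.rTensor S
  onM := ε.onM.rTensor S
  leibniz := rTensor_mul_of_leibniz ε.leibniz
  onA_act a x := rTensor_comm S (ε.onA_act a) x
  onM_tr := rTensor_comm S (fun x => ε.onM_tr x)

variable {T} in
/-- The base change to `S` of a morphism. -/
noncomputable def Hom.baseChange {A' M' : Type*} [Ring A'] [Algebra R A'] [AddCommGroup M']
    [Module R M'] {T' : TracedAction R L A' M'} (S : Type*) [CommRing S] [Algebra R S]
    (f : Hom T T') : Hom (T.baseChange S) (T'.baseChange S) where
  onA := Algebra.TensorProduct.map f.onA (AlgHom.id R S)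
  onM := f.onM.rTensor S
  onA_act a := rTensor_comm S (g := f.onA.toLinearMap) (g' := f.onA.toLinearMap) (f.onA_act a)
  onM_tr := rTensor_comm S (g := f.onA.toLinearMap) f.onM_tr

end BaseChange

section FlatAdjoint

variable {R L A M S : Type*} [CommRing R] [LieRing L] [LieAlgebra R L] [Ring A] [Algebra R A]
  [AddCommGroup M] [Module R M] [CommRing S] [Algebra R S] {T : TracedAction R L A M}

/-- A trace-preserving anti-automorphism taking the flat connection `∇` to the flat connection
`∇ + conn`, such as taking adjoints for a bilinear form. -/
structure FlatAdjoint (T : TracedAction R L A M) where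
  star : A →ₗ[R] A
  conn : L →ₗ[R] A
  star_one : star 1 = 1
  star_mul : ∀ x y, star (x * y) = star y * star x
  tr_star : ∀ x, T.tr (star x) = T.tr x
  star_act : ∀ a x, star (T.act a x) = T.act a (star x) + conn a * star x - star x * conn a
  curvature_conn : T.curvature conn = 0

namespace FlatAdjoint

variable (σ : T.FlatAdjoint)

/-- The connection form of the adjoint of `∇ + β`. -/
def dual (β : L →ₗ[R] A) : L →ₗ[R] A :=
  σ.conn - σ.star ∘ₗ β

theorem oneForm_dual (β : L →ₗ[R] A) :
    oneForm (σ.dual β) = oneForm σ.conn - map σ.star (oneForm β) := by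
  rw [map_oneForm, ← oneForm_sub]
  rfl

theorem dual_zero : σ.dual 0 = σ.conn := by
  rw [dual, LinearMap.comp_zero, sub_zero]

theorem map_star_mul_of_even {x : WordForm L A} (hx : involute x = x) (y : WordForm L A) :
    map σ.star (x * y) = map σ.star y * map σ.star x :=
  map_mul_rev_of_even (f := σ.star.toAddMonoidHom) (g := AddMonoidHom.id A)
    (φ := σ.star.toAddMonoidHom) σ.star_mul hx y

theorem map_star_mul_of_odd {x : WordForm L A} (hx : involute x = -x) (y : WordForm L A) :
    map σ.star (x * y) = map σ.star (involute y) * map σ.star x :=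
  funext fun l => (map_mul_rev_apply (f := σ.star.toAddMonoidHom) (g := AddMonoidHom.id A)
    (φ := σ.star.toAddMonoidHom) σ.star_mul l x y).2 hx

theorem map_star_diff_oneForm (β : L →ₗ[R] A) :
    map σ.star (diff T.act (oneForm β)) =
      diff T.act (map σ.star (oneForm β)) + oneForm σ.conn * map σ.star (oneForm β) +
        map σ.star (oneForm β) * oneForm σ.conn := by
  rw [map_oneForm]
  refine ext_contract (by simp) fun a => ext_contract ?_ fun b => ext_contract ?_ fun c => ?_
  · simp [contract_map, contract_mul, contract_diff]
  · simp only [contract_map, contract_diff_oneForm, map_oneForm, contract_oneForm,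
      Function.comp_apply, map_sub, σ.star_act, const_nil, map_add, contract_mul,
      involute_oneForm, neg_mul, contract_const, zero_mul, involute_const, zero_add, map_neg,
      mul_zero, add_zero, WordForm.add_apply, WordForm.sub_apply, mul_nil, WordForm.neg_apply]
    abel
  · simp [contract_map, contract_diff_oneForm, contract_mul, map_oneForm]

theorem map_star_curvature (β : L →ₗ[R] A) :
    map σ.star (T.curvature β) = -T.curvature (σ.dual β) := by
  have hsq : map σ.star (oneForm β * oneForm β) =
      -(map σ.star (oneForm β) * map σ.star (oneForm β)) := by
    rw [σ.map_star_mul_of_odd (involute_oneForm β), involute_oneForm, map_neg, neg_mul]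
  have hconn := σ.curvature_conn
  rw [curvature, add_eq_zero_iff_eq_neg] at hconn
  rw [curvature, curvature, map_add, hsq, map_star_diff_oneForm, oneForm_dual, map_sub, hconn]
  noncomm_ring

theorem map_star_curvature_pow (β : L →ₗ[R] A) (n : ℕ) :
    map σ.star (T.curvature β ^ n) = (-T.curvature (σ.dual β)) ^ n := by
  induction n with
  | zero => rw [pow_zero, pow_zero, one_def, WordForm.map_const, σ.star_one]
  | succ n ih =>
    rw [pow_succ, σ.map_star_mul_of_even (involute_pow_of_even (T.involute_curvature β) n), ih,
      map_star_curvature, pow_succ']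

theorem map_tr_map_star (x : WordForm L A) : map T.tr (map σ.star x) = map T.tr x :=
  map_map_of_comp_eq T.tr σ.star T.tr σ.tr_star x

theorem chernForm_dual (β : L →ₗ[R] A) {n : ℕ} (hn : Odd n) :
    T.chernForm (σ.dual β) n = -T.chernForm β n := by
  rw [chernForm, chernForm, ← σ.map_tr_map_star (T.curvature β ^ n), map_star_curvature_pow,
    hn.neg_pow, map_neg, neg_neg]

theorem transgression_dual (β γ : L →ₗ[R] A) {n : ℕ} (hn : Even n) :
    T.transgression (σ.dual β) (σ.star ∘ₗ γ) n = T.transgression β γ n := by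
  have hR := involute_pow_of_even (T.involute_curvature β) n
  rw [transgression, transgression, ← hn.neg_pow, ← map_star_curvature_pow,
    ← T.map_tr_mul_comm_of_even hR, ← σ.map_tr_map_star (T.curvature β ^ n * _),
    σ.map_star_mul_of_even hR, map_oneForm]
  rfl

theorem transgression_dual_neg (β γ : L →ₗ[R] A) {n : ℕ} (hn : Even n) :
    T.transgression (σ.dual β) (-(σ.star ∘ₗ γ)) n = -T.transgression β γ n := by
  rw [transgression_neg, σ.transgression_dual β γ hn]

variable (S) in
/-- The base change to `S` of the adjoint. -/
noncomputable def baseChange : (T.baseChange S).FlatAdjoint where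
  star := σ.star.rTensor S
  conn := family σ.conn 1
  star_one := by
    rw [Algebra.TensorProduct.one_def, LinearMap.rTensor_tmul, σ.star_one]
  star_mul x y := by
    induction x with
    | zero => simp
    | add x x' hx hx' => rw [add_mul, map_add, hx, hx', map_add, mul_add]
    | tmul x p =>
      induction y with
      | zero => simp
      | add y y' hy hy' => rw [mul_add, map_add, hy, hy', map_add, add_mul]
      | tmul y q => simp [σ.star_mul, mul_comm p q]
  tr_star x := by
    have h : T.tr ∘ₗ σ.star = T.tr := LinearMap.ext σ.tr_star
    exact LinearMap.congr_fun ((LinearMap.rTensor_comp S T.tr σ.star).symm.trans (congrArg _ h)) x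
  star_act a x := by
    induction x with
    | zero => simp
    | add x x' hx hx' => simp only [map_add, mul_add, add_mul, hx, hx']; abel
    | tmul x p =>
      simp [TracedAction.baseChange, family_apply, σ.star_act, add_tmul, sub_tmul]
  curvature_conn := by rw [curvature_family_one, σ.curvature_conn, _root_.map_zero]

end FlatAdjoint

end FlatAdjoint

end TracedAction

section UnitIntegral

open Polynomial

variable {𝕜 : Type*} [Field 𝕜]

/-- The integral of polynomials over the unit interval. -/
noncomputable def unitIntegral : 𝕜[X] →ₗ[𝕜] 𝕜 :=
  Polynomial.lsum fun k => ((k : 𝕜) + 1)⁻¹ • LinearMap.id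

theorem unitIntegral_monomial (k : ℕ) (c : 𝕜) :
    unitIntegral (monomial k c) = ((k : 𝕜) + 1)⁻¹ * c := by
  simp [unitIntegral, Polynomial.lsum_apply, Polynomial.sum_monomial_index]

theorem unitIntegral_comp_derivative [CharZero 𝕜] :
    unitIntegral ∘ₗ (derivative' : Derivation 𝕜 𝕜[X] 𝕜[X]).toLinearMap =
      (aeval (1 : 𝕜)).toLinearMap - (aeval (0 : 𝕜)).toLinearMap := by
  refine Polynomial.lhom_ext' fun k => LinearMap.ext_ring ?_
  cases k with
  | zero => simp
  | succ k =>
    simp [unitIntegral_monomial, ← mul_add_one, Nat.cast_add_one_ne_zero k]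

end UnitIntegral

namespace TracedAction

open WordForm TensorProduct Polynomial

section ChernSimons

variable {𝕜 L A M : Type*} [Field 𝕜] [LieRing L] [LieAlgebra 𝕜 L] [Ring A] [Algebra 𝕜 A]
  [AddCommGroup M] [Module 𝕜 M] (T : TracedAction 𝕜 L A M)

/-- The affine path from `β₀` to `β₁`, as a family with parameter `X`. -/
noncomputable def path (β₀ β₁ : L →ₗ[𝕜] A) : L →ₗ[𝕜] A ⊗[𝕜] 𝕜[X] :=
  family β₀ 1 + family (β₁ - β₀) X

/-- The Chern–Simons form of the pair `∇ + β₀`, `∇ + β₁`, with index shifted by one and without the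
constant factor: `(n + 1) • csForm β₀ β₁ n` is `cs_{n+1}`. -/
noncomputable def csForm (β₀ β₁ : L →ₗ[𝕜] A) (n : ℕ) : WordForm L M :=
  map (specialize M unitIntegral)
    ((T.baseChange 𝕜[X]).transgression (path β₀ β₁) (family (β₁ - β₀) 1) n)

/-- The integral of the second transgression along the path from `β₀` to `β₁`, of which the second
direction is the derivative in a further parameter. -/
noncomputable def csVariation (ε : T.ParamDeriv) (β₀ β₁ : L →ₗ[𝕜] A) (n : ℕ) : WordForm L M :=
  map (specialize M unitIntegral)
    ((T.baseChange 𝕜[X]).transgression₂ (path β₀ β₁) (family (β₁ - β₀) 1)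
      ((ε.baseChange 𝕜[X]).onA ∘ₗ path β₀ β₁) n)

/-- A primitive of the cyclic sum of the Chern–Simons forms of three connections, namely the
variation of `csForm β₀ β` for `β` running from `β₁` to `β₂`. -/
noncomputable def csTriangle (β₀ β₁ β₂ : L →ₗ[𝕜] A) (n : ℕ) : WordForm L M :=
  map (specialize M unitIntegral)
    ((T.baseChange 𝕜[X]).csVariation (T.paramDeriv derivative') (family β₀ 1) (path β₁ β₂) n)

theorem derivative_comp_path (β₀ β₁ : L →ₗ[𝕜] A) :
    (T.paramDeriv derivative').onA ∘ₗ path β₀ β₁ = family (β₁ - β₀) 1 := by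
  refine LinearMap.ext fun a => ?_
  simp [paramDeriv, path, family_apply]

theorem derivative_comp_family_one (β : L →ₗ[𝕜] A) :
    (T.paramDeriv (derivative' (R := 𝕜))).onA ∘ₗ family β 1 = 0 := by
  refine LinearMap.ext fun a => ?_
  simp [paramDeriv, family_apply]

theorem evaluation_comp_family_one (φ : 𝕜[X] →ₐ[𝕜] 𝕜) (β : L →ₗ[𝕜] A) :
    (T.evaluation φ).onA.toLinearMap ∘ₗ family β 1 = β := by
  refine LinearMap.ext fun a => ?_
  simp [evaluation, family_apply]

theorem evaluation_zero_comp_path (β₀ β₁ : L →ₗ[𝕜] A) :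
    (T.evaluation (aeval 0)).onA.toLinearMap ∘ₗ path β₀ β₁ = β₀ := by
  refine LinearMap.ext fun a => ?_
  simp [evaluation, path, family_apply]

theorem evaluation_one_comp_path (β₀ β₁ : L →ₗ[𝕜] A) :
    (T.evaluation (aeval 1)).onA.toLinearMap ∘ₗ path β₀ β₁ = β₁ := by
  refine LinearMap.ext fun a => ?_
  simp [evaluation, path, family_apply]

theorem map_unitIntegral_derivative [CharZero 𝕜] (x : WordForm L (M ⊗[𝕜] 𝕜[X])) :
    map (specialize M unitIntegral) (map (T.paramDeriv derivative').onM x) =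
      map (T.evaluation (aeval 1)).onM x - map (T.evaluation (aeval 0)).onM x := by
  funext l
  change TensorProduct.rid 𝕜 M _ = TensorProduct.rid 𝕜 M _ - TensorProduct.rid 𝕜 M _
  rw [← map_sub, ← LinearMap.sub_apply, ← LinearMap.lTensor_sub, ← unitIntegral_comp_derivative,
    LinearMap.lTensor_comp]
  rfl

theorem diff_csForm [CharZero 𝕜] (β₀ β₁ : L →ₗ[𝕜] A) (n : ℕ) :
    (n + 1) • diff T.actM (T.csForm β₀ β₁ n) =
      T.chernForm β₁ (n + 1) - T.chernForm β₀ (n + 1) := by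
  have h := T.map_unitIntegral_derivative
    ((T.baseChange 𝕜[X]).chernForm (path β₀ β₁) (n + 1))
  rw [ParamDeriv.map_chernForm, derivative_comp_path, Hom.map_chernForm, Hom.map_chernForm,
    evaluation_one_comp_path, evaluation_zero_comp_path] at h
  rw [← h, map_nsmul, csForm, diff_map_specialize]

variable {T} in
theorem Hom.map_csForm {A' M' : Type*} [Ring A'] [Algebra 𝕜 A'] [AddCommGroup M'] [Module 𝕜 M']
    {T' : TracedAction 𝕜 L A' M'} (f : Hom T T') (β₀ β₁ : L →ₗ[𝕜] A) (n : ℕ) :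
    map f.onM (T.csForm β₀ β₁ n) =
      T'.csForm (f.onA.toLinearMap ∘ₗ β₀) (f.onA.toLinearMap ∘ₗ β₁) n := by
  have hpath : (f.baseChange 𝕜[X]).onA.toLinearMap ∘ₗ path β₀ β₁ =
      path (f.onA.toLinearMap ∘ₗ β₀) (f.onA.toLinearMap ∘ₗ β₁) := by
    rw [path, path, ← LinearMap.comp_sub, LinearMap.comp_add]
    rfl
  have hfamily : (f.baseChange 𝕜[X]).onA.toLinearMap ∘ₗ family (β₁ - β₀) 1 =
      family (f.onA.toLinearMap ∘ₗ β₁ - f.onA.toLinearMap ∘ₗ β₀) 1 := by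
    rw [← LinearMap.comp_sub]
    rfl
  have htransgression := (f.baseChange 𝕜[X]).map_transgression (path β₀ β₁) (family (β₁ - β₀) 1) n
  rw [hpath, hfamily] at htransgression
  rw [csForm, csForm, map_map_specialize, ← htransgression]
  rfl

theorem diff_csVariation [CharZero 𝕜] (ε : T.ParamDeriv) (β₀ β₁ : L →ₗ[𝕜] A) (n : ℕ) :
    diff T.actM (T.csVariation ε β₀ β₁ n) =
      T.transgression β₁ (ε.onA ∘ₗ β₁) n - T.transgression β₀ (ε.onA ∘ₗ β₀) n -
        map ε.onM (T.csForm β₀ β₁ n) := by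
  have hcomm : Commute (T.paramDeriv derivative').onA (ε.baseChange 𝕜[X]).onA :=
    LinearMap.ext (lTensor_rTensor_comm ε.onA (derivative' (R := 𝕜)).toLinearMap)
  have heval (φ : 𝕜[X] →ₐ[𝕜] 𝕜) : (T.evaluation φ).onA.toLinearMap ∘ₗ
      (ε.baseChange 𝕜[X]).onA ∘ₗ path β₀ β₁ =
        ε.onA ∘ₗ (T.evaluation φ).onA.toLinearMap ∘ₗ path β₀ β₁ := by
    rw [evaluation_onA_toLinearMap]
    exact LinearMap.ext fun a => specialize_rTensor φ.toLinearMap ε.onA (path β₀ β₁ a)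
  have h := diff_transgression₂ (T.paramDeriv derivative') (ε.baseChange 𝕜[X]) hcomm
    (path β₀ β₁) n
  rw [derivative_comp_path] at h
  rw [csVariation, diff_map_specialize, h, map_sub, map_unitIntegral_derivative,
    Hom.map_transgression, Hom.map_transgression, heval, heval, evaluation_one_comp_path,
    evaluation_zero_comp_path, csForm, map_map_specialize]
  rfl

theorem diff_csTriangle [CharZero 𝕜] (β₀ β₁ β₂ : L →ₗ[𝕜] A) (n : ℕ) :
    diff T.actM (T.csTriangle β₀ β₁ β₂ n) =
      T.csForm β₀ β₁ n + T.csForm β₁ β₂ n - T.csForm β₀ β₂ n := by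
  rw [csTriangle, diff_map_specialize, diff_csVariation, derivative_comp_path,
    derivative_comp_family_one, transgression_zero, sub_zero, map_sub,
    map_unitIntegral_derivative, Hom.map_csForm, Hom.map_csForm, evaluation_comp_family_one,
    evaluation_comp_family_one, evaluation_one_comp_path, evaluation_zero_comp_path, csForm, csForm,
    csForm]
  abel

namespace FlatAdjoint

variable {T} (σ : T.FlatAdjoint)

theorem dual_path (β₀ β₁ : L →ₗ[𝕜] A) :
    (σ.baseChange 𝕜[X]).dual (path β₀ β₁) = path (σ.dual β₀) (σ.dual β₁) := by
  refine LinearMap.ext fun a => ?_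
  simp only [dual, FlatAdjoint.baseChange, path, LinearMap.sub_apply, family_apply,
    LinearMap.coe_comp, Function.comp_apply, LinearMap.add_apply, sub_tmul, map_add,
    LinearMap.rTensor_tmul, map_sub, sub_sub_sub_cancel_left]
  abel

theorem csForm_dual (β₀ β₁ : L →ₗ[𝕜] A) {n : ℕ} (hn : Even n) :
    T.csForm (σ.dual β₀) (σ.dual β₁) n = -T.csForm β₀ β₁ n := by
  have hstar : family (σ.dual β₁ - σ.dual β₀) 1 =
      -((σ.baseChange 𝕜[X]).star ∘ₗ family (β₁ - β₀) 1) := by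
    refine LinearMap.ext fun a => ?_
    simp [FlatAdjoint.baseChange, dual, family_apply, sub_tmul]
  rw [csForm, hstar, ← dual_path, transgression_dual_neg _ _ _ hn, map_neg, csForm]

theorem chernForm_eq_zero [CharZero 𝕜] {β : L →ₗ[𝕜] A} (hβ : σ.dual β = β) {n : ℕ}
    (hn : Odd n) : T.chernForm β n = 0 := by
  have h := σ.chernForm_dual β hn
  have : IsAddTorsionFree M := .of_isTorsionFree 𝕜 M
  rw [hβ] at h
  exact funext fun l => self_eq_neg.mp (congrFun h l)

theorem diff_csForm_eq_zero [CharZero 𝕜] {β₀ β₁ : L →ₗ[𝕜] A}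
    (hβ₀ : T.curvature β₀ = 0) (hβ₁ : σ.dual β₁ = β₁) {n : ℕ} (hn : Even n) :
    diff T.actM (T.csForm β₀ β₁ n) = 0 := by
  have h := T.diff_csForm β₀ β₁ n
  have : IsAddTorsionFree M := .of_isTorsionFree 𝕜 M
  rw [σ.chernForm_eq_zero hβ₁ hn.add_one, chernForm, hβ₀, zero_pow n.succ_ne_zero,
    _root_.map_zero, sub_zero] at h
  exact funext fun l => (smul_eq_zero.mp (congrFun h l)).resolve_left n.succ_ne_zero

/-- By duality, the two sides at the self-dual vertex of the triangle `0`, `conn`, `β` agree. -/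
theorem diff_csTriangle_conn [CharZero 𝕜] {β : L →ₗ[𝕜] A} (hβ : σ.dual β = β) {n : ℕ}
    (hn : Even n) :
    diff T.actM (T.csTriangle 0 σ.conn β n) = T.csForm 0 σ.conn n - 2 • T.csForm 0 β n := by
  have h := σ.csForm_dual 0 β hn
  rw [hβ, dual_zero] at h
  rw [T.diff_csTriangle, h, two_nsmul]
  abel

end FlatAdjoint

end ChernSimons

end TracedAction

namespace WordForm

section Module

variable {R L B : Type*} [CommRing R]

instance [AddCommGroup B] [Module R B] : Module R (WordForm L B) :=
  inferInstanceAs (Module R (List L → B))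

@[simp] theorem smul_apply [AddCommGroup B] [Module R B] (c : R) (x : WordForm L B) (l : List L) :
    (c • x) l = c • x l := rfl

theorem contract_smul [AddCommGroup B] [Module R B] (c : R) (a : L) (x : WordForm L B) :
    contract a (c • x) = c • contract a x := rfl

theorem involute_smul [AddCommGroup B] [Module R B] (c : R) (x : WordForm L B) :
    involute (c • x) = c • involute x :=
  funext fun l => smul_comm ((-1 : ℤ) ^ l.length) c (x l)

variable [Ring B] [Algebra R B]

instance : IsScalarTower R (WordForm L B) (WordForm L B) where
  smul_assoc c x y := by
    simp only [smul_eq_mul]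
    funext l
    induction l generalizing x y with
    | nil => simp
    | cons a l ih => simp only [mul_cons, smul_apply, contract_smul, involute_smul, ih, smul_add]

instance : SMulCommClass R (WordForm L B) (WordForm L B) where
  smul_comm c x y := by
    simp only [smul_eq_mul]
    funext l
    induction l generalizing x y with
    | nil => simp
    | cons a l ih => simp only [mul_cons, smul_apply, contract_smul, ← ih, smul_add]

end Module

section IsAlternating

variable {R L B B' : Type*} [CommRing R] [AddCommGroup L] [Module R L]

section AddCommGroup

variable [AddCommGroup B] [Module R B] [AddCommGroup B'] [Module R B'] {n : ℕ} {x y : WordForm L B}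

variable (R) in
/-- The forms of degree `n` which are `R`-multilinear and alternating. -/
def IsAlternating : ℕ → WordForm L B → Prop
  | 0, x => ∀ a, contract a x = 0
  | n + 1, x => x [] = 0 ∧ IsLinearMap R (fun a => contract a x) ∧
      (∀ a, contract a (contract a x) = 0) ∧ ∀ a, IsAlternating n (contract a x)

variable (R) in
theorem isAlternating_zero (n : ℕ) : IsAlternating R n (0 : WordForm L B) := by
  induction n with
  | zero => exact fun a => map_zero _
  | succ n ih => exact ⟨rfl, ⟨fun _ _ => (add_zero 0).symm, fun c _ => (smul_zero c).symm⟩,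
      fun _ => rfl, fun _ => ih⟩

variable (R) in
theorem isAlternating_const (c : B) : IsAlternating R 0 (const (L := L) c) :=
  fun a => contract_const a c

theorem isAlternating_oneForm (α : L →ₗ[R] B) : IsAlternating R 1 (oneForm α) := by
  refine ⟨rfl, ⟨fun a b => ?_, fun c a => ?_⟩, fun a => ?_, fun a => isAlternating_const R (α a)⟩
  · rw [contract_oneForm, map_add, map_add]
    rfl
  · refine ext_contract ?_ fun b => ?_
    · simp
    · simp [contract_smul]
  · rw [contract_oneForm, contract_const]

namespace IsAlternating

theorem isLinearMap_contract (hx : IsAlternating R n x) :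
    IsLinearMap R fun a => contract a x := by
  cases n with
  | zero =>
    rw [show (fun a => contract a x) = 0 from funext hx]
    exact (0 : L →ₗ[R] WordForm L B).isLinear
  | succ n => exact hx.2.1

theorem contract_self (hx : IsAlternating R n x) (a : L) : contract a (contract a x) = 0 := by
  cases n with
  | zero => rw [hx a, map_zero]
  | succ n => exact hx.2.2.1 a

theorem contract (hx : IsAlternating R n x) (a : L) :
    IsAlternating R (n - 1) (contract a x) := by
  cases n with
  | zero => exact hx a ▸ isAlternating_zero R _
  | succ n => exact hx.2.2.2 a

theorem contract_contract (hx : IsAlternating R n x) (a b : L) :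
    WordForm.contract a (WordForm.contract b x) =
      -WordForm.contract b (WordForm.contract a x) := by
  have h := hx.contract_self (a + b)
  have hlin := hx.isLinearMap_contract.map_add a b
  rw [hlin, map_add, (hx.contract a).isLinearMap_contract.map_add,
    (hx.contract b).isLinearMap_contract.map_add, hx.contract_self, hx.contract_self, zero_add,
    add_zero] at h
  exact eq_neg_of_add_eq_zero_right h

theorem apply_eq_zero (hx : IsAlternating R n x) {l : List L} (hl : l.length ≠ n) : x l = 0 := by
  induction n generalizing x l with
  | zero =>
    cases l with
    | nil => exact absurd rfl hl
    | cons a l => exact congrFun (hx a) l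
  | succ n ih =>
    cases l with
    | nil => exact hx.1
    | cons a l => exact ih (hx.contract a) (by simpa using hl)

theorem add (hx : IsAlternating R n x) (hy : IsAlternating R n y) : IsAlternating R n (x + y) := by
  induction n generalizing x y with
  | zero => exact fun a => by rw [map_add, hx a, hy a, add_zero]
  | succ n ih =>
    refine ⟨by rw [add_apply, hx.1, hy.1, add_zero],
      (hx.isLinearMap_contract.mk' _ + hy.isLinearMap_contract.mk' _).isLinear, fun a => ?_,
      fun a => ih (hx.contract a) (hy.contract a)⟩
    rw [map_add, map_add, hx.contract_self, hy.contract_self, add_zero]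

theorem map (hx : IsAlternating R n x) (f : B →ₗ[R] B') : IsAlternating R n (map f x) := by
  induction n generalizing x with
  | zero => exact fun a => by rw [contract_map, hx a, map_zero]
  | succ n ih =>
    refine ⟨by rw [map_apply, hx.1, map_zero], ⟨fun a b => ?_, fun c a => ?_⟩, fun a => ?_,
      fun a => ih (hx.contract a)⟩
    · simp only [contract_map, hx.isLinearMap_contract.map_add, map_add]
    · simp only [contract_map, hx.isLinearMap_contract.map_smul]
      exact funext fun l => f.map_smul c _
    · rw [contract_map, contract_map, hx.contract_self, map_zero]

theorem neg (hx : IsAlternating R n x) : IsAlternating R n (-x) :=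
  hx.map (-LinearMap.id)

theorem nsmul (hx : IsAlternating R n x) (k : ℕ) : IsAlternating R n (k • x) :=
  hx.map (k • LinearMap.id)

theorem involute (hx : IsAlternating R n x) : IsAlternating R n (involute x) := by
  induction n generalizing x with
  | zero => exact fun a => by rw [contract_involute, hx a, map_zero, neg_zero]
  | succ n ih =>
    refine ⟨by rw [involute_nil, hx.1], ⟨fun a b => ?_, fun c a => ?_⟩, fun a => ?_, fun a => ?_⟩
    · simp only [contract_involute, hx.isLinearMap_contract.map_add, map_add, neg_add]
    · simp only [contract_involute, hx.isLinearMap_contract.map_smul, involute_smul, smul_neg]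
    · rw [contract_involute, map_neg, contract_involute, hx.contract_self, map_zero, neg_zero,
        neg_zero]
    · rw [contract_involute]
      exact (ih (hx.contract a)).neg

theorem exists_alternatingMap (hx : IsAlternating R n x) :
    ∃ f : L [⋀^Fin n]→ₗ[R] B, ∀ v, f v = x (List.ofFn v) := by
  induction n generalizing x with
  | zero =>
    exact ⟨AlternatingMap.constOfIsEmpty R L (Fin 0) (x []), fun v => by rw [List.ofFn_zero]; rfl⟩
  | succ n ih =>
    choose f hf using fun a => ih (hx.contract a)
    have hf_cons (v : Fin (n + 1) → L) : x (List.ofFn v) = f (v 0) (Fin.tail v) := by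
      rw [hf, List.ofFn_succ]
      rfl
    let F : L →ₗ[R] MultilinearMap R (fun _ : Fin n => L) B :=
      { toFun a := (f a).toMultilinearMap
        map_add' a b := MultilinearMap.ext fun v => by
          simp [hf, hx.isLinearMap_contract.map_add]
        map_smul' c a := MultilinearMap.ext fun v => by
          simp [hf, hx.isLinearMap_contract.map_smul] }
    have hzero (v : Fin (n + 1) → L) (j : Fin n) (hv : v 0 = v j.succ) :
        f (v 0) (Fin.tail v) = 0 := by
      obtain ⟨n, rfl⟩ : ∃ k, n = k + 1 := ⟨n - 1, by grind [j.isLt]⟩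
      have hswap : f (v 0) (Fin.tail v ∘ Equiv.swap 0 j) = 0 := by
        have hhead : (Fin.tail v ∘ Equiv.swap 0 j) 0 = v 0 := by
          rw [Function.comp_apply, Equiv.swap_apply_left, hv]
          rfl
        rw [hf, List.ofFn_succ, hhead]
        exact congrFun (hx.contract_self (v 0)) _
      rwa [AlternatingMap.map_perm, smul_eq_zero_iff_eq] at hswap
    refine ⟨{ F.uncurryLeft with map_eq_zero_of_eq' := fun v i j hv hij => ?_ }, fun v => ?_⟩
    · change f (v 0) (Fin.tail v) = 0
      induction i using Fin.cases with
      | zero =>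
        obtain ⟨j, rfl⟩ := Fin.exists_succ_eq.mpr hij.symm
        exact hzero v j hv
      | succ i =>
        induction j using Fin.cases with
        | zero => exact hzero v i hv.symm
        | succ j => exact (f (v 0)).map_eq_zero_of_eq _ hv (by simpa using hij)
    · rw [hf_cons]
      rfl

end IsAlternating

theorem isAlternating_sum {ι : Type*} {s : Finset ι} {z : ι → WordForm L B}
    (h : ∀ i ∈ s, IsAlternating R n (z i)) : IsAlternating R n (∑ i ∈ s, z i) :=
  Finset.sum_induction z (IsAlternating R n) (fun _ _ => IsAlternating.add)
    (isAlternating_zero R n) h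

end AddCommGroup

section Algebra

variable [Ring B] [Algebra R B] {m n : ℕ} {x y : WordForm L B}

namespace IsAlternating

theorem mul (hx : IsAlternating R m x) (hy : IsAlternating R n y) :
    IsAlternating R (m + n) (x * y) := by
  obtain ⟨k, hk⟩ : ∃ k, m + n = k := ⟨_, rfl⟩
  induction k generalizing m n x y with
  | zero =>
    obtain ⟨rfl, rfl⟩ := Nat.add_eq_zero_iff.mp hk
    exact fun a => by rw [contract_mul, hx a, hy a, zero_mul, mul_zero, add_zero]
  | succ k ih =>
    have hleft (a : L) : IsAlternating R k (WordForm.contract a x * y) := by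
      cases m with
      | zero => exact hx a ▸ (zero_mul y).symm ▸ isAlternating_zero R k
      | succ m =>
        obtain rfl : m + n = k := by omega
        exact ih (hx.contract a) hy rfl
    have hright (a : L) : IsAlternating R k (WordForm.involute x * WordForm.contract a y) := by
      cases n with
      | zero => exact hy a ▸ (mul_zero (WordForm.involute x)).symm ▸ isAlternating_zero R k
      | succ n =>
        obtain rfl : m + n = k := by omega
        exact ih hx.involute (hy.contract a) rfl
    rw [hk]
    refine ⟨?_, ⟨fun a b => ?_, fun c a => ?_⟩, fun a => ?_, fun a => (hleft a).add (hright a)⟩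
    · rcases m with _ | m
      · rw [mul_nil, hy.apply_eq_zero (by simp; omega), mul_zero]
      · rw [mul_nil, hx.1, zero_mul]
    · simp only [contract_mul, hx.isLinearMap_contract.map_add, hy.isLinearMap_contract.map_add,
        add_mul, mul_add]
      abel
    · simp only [contract_mul, hx.isLinearMap_contract.map_smul, hy.isLinearMap_contract.map_smul,
        smul_mul_assoc, mul_smul_comm, smul_add]
    · simp only [contract_mul, map_add, contract_involute, hx.contract_self, hy.contract_self,
        involute_involute]
      noncomm_ring

theorem pow (hx : IsAlternating R m x) (n : ℕ) : IsAlternating R (m * n) (x ^ n) := by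
  induction n with
  | zero => exact pow_zero x ▸ isAlternating_const R 1
  | succ n ih => exact pow_succ x n ▸ ih.mul hx

theorem powDeriv (hx : IsAlternating R m x) (hy : IsAlternating R n y) (k : ℕ) :
    IsAlternating R (m * k + n) (powDeriv x (k + 1) y) := by
  refine isAlternating_sum fun i hi => ?_
  have hdeg : m * i + n + m * (k + 1 - 1 - i) = m * k + n := by
    rw [add_right_comm, ← mul_add, show i + (k + 1 - 1 - i) = k by grind]
  exact hdeg ▸ ((hx.pow i).mul hy).mul (hx.pow _)

end IsAlternating

end Algebra

end IsAlternating

end WordForm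

namespace WordForm

section HeadAlt

variable {L B : Type*} [AddCommGroup B]

/-- The values of `headAlt`. -/
def headAltApply : List L → (L → WordForm L B) →+ B
  | [] => 0
  | a :: l => (eval l).comp (Pi.evalAddMonoidHom _ a) -
      (headAltApply l).comp (AddMonoidHom.compLeft (contract a) L)

/-- Alternation of the distinguished argument `b` of a family of forms `G b` with the others,
`(a₀, …, aₙ) ↦ ∑ᵢ (-1)ⁱ G(aᵢ)(a₀, …, âᵢ, …, aₙ)`. -/
def headAlt : (L → WordForm L B) →+ WordForm L B :=
  lift headAltApply

@[simp] theorem headAlt_nil (G : L → WordForm L B) : headAlt G [] = 0 := rfl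

theorem contract_headAlt (a : L) (G : L → WordForm L B) :
    contract a (headAlt G) = G a - headAlt fun b => contract a (G b) := rfl

theorem headAlt_cons (G : L → WordForm L B) (a : L) (l : List L) :
    headAlt G (a :: l) = G a l - headAlt (fun b => contract a (G b)) l := rfl

theorem headAlt_ofFn (n : ℕ) (G : L → WordForm L B) (v : Fin (n + 1) → L) :
    headAlt G (List.ofFn v) =
      ∑ i : Fin (n + 1), (-1 : ℤ) ^ (i : ℕ) • G (v i) (List.ofFn fun k => v (i.succAbove k)) := by
  induction n generalizing G with
  | zero => simp [headAlt_cons]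
  | succ n ih =>
    rw [List.ofFn_succ, headAlt_cons, ih, Fin.sum_univ_succ (n := n + 1), sub_eq_add_neg,
      ← Finset.sum_neg_distrib]
    congr 1
    · simp
    · refine Finset.sum_congr rfl fun i _ => ?_
      rw [List.ofFn_succ (n := n)]
      simp [pow_succ, contract_apply]

theorem headAlt_involute (G : L → WordForm L B) :
    headAlt (fun b => involute (G b)) = -involute (headAlt G) := by
  funext l
  induction l generalizing G with
  | nil => simp
  | cons a l ih =>
    have hneg : (fun b => contract a (involute (G b))) = -fun b => involute (contract a (G b)) :=
      funext fun b => contract_involute a (G b)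
    rw [headAlt_cons, hneg, map_neg, neg_apply, ih, neg_apply, neg_apply, neg_neg,
      ← contract_apply a (involute _), contract_involute, contract_headAlt, map_sub, neg_apply,
      sub_apply, neg_neg]

/-- Alternation of the first `n` arguments, without normalization. -/
def alternate : ℕ → WordForm L B →+ WordForm L B
  | 0 => const.comp (eval [])
  | n + 1 => headAlt.comp (AddMonoidHom.pi fun b => (alternate n).comp (contract b))

theorem alternate_zero (x : WordForm L B) : alternate 0 x = const (x []) := rfl

theorem alternate_succ (n : ℕ) (x : WordForm L B) :
    alternate (n + 1) x = headAlt fun b => alternate n (contract b x) := rfl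

end HeadAlt

section Alternate

variable {R L B : Type*} [CommRing R] [AddCommGroup L] [Module R L] [AddCommGroup B] [Module R B]
  {n : ℕ} {x : WordForm L B}

theorem IsAlternating.headAlt_contract (hx : IsAlternating R n x) :
    headAlt (fun b => WordForm.contract b x) = n • x := by
  induction n generalizing x with
  | zero =>
    rw [zero_smul, show (fun b => WordForm.contract b x) = 0 from funext hx, _root_.map_zero]
  | succ n ih =>
    refine ext_contract (by simp [hx.1]) fun a => ?_
    have hswap : (fun b => WordForm.contract a (WordForm.contract b x)) =
        -fun b => WordForm.contract b (WordForm.contract a x) :=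
      funext fun b => hx.contract_contract a b
    rw [contract_headAlt, hswap, _root_.map_neg, ih (hx.contract a), map_nsmul, succ_nsmul,
      sub_neg_eq_add, add_comm]

theorem IsAlternating.alternate_eq (hx : IsAlternating R n x) :
    alternate n x = n.factorial • x := by
  induction n generalizing x with
  | zero => exact ext_contract (by simp [alternate_zero]) fun a => by simp [alternate_zero, hx a]
  | succ n ih =>
    have hterm : (fun b => alternate n (WordForm.contract b x)) =
        n.factorial • fun b => WordForm.contract b x :=
      funext fun b => ih (hx.contract b)
    rw [alternate_succ, hterm, map_nsmul, hx.headAlt_contract, smul_smul, Nat.factorial_succ,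
      mul_comm]

end Alternate

section Perm

/-- The permutation of `Fin (n + 1)` with first value `i` and remaining values enumerated by `σ`. -/
def consPerm {n : ℕ} (i : Fin (n + 1)) (σ : Equiv.Perm (Fin n)) : Equiv.Perm (Fin (n + 1)) :=
  (Fin.cycleRange i)⁻¹ * Equiv.Perm.decomposeFin.symm (0, σ)

variable {n : ℕ} (i : Fin (n + 1)) (σ : Equiv.Perm (Fin n))

@[simp] theorem consPerm_zero : consPerm i σ 0 = i := by
  simp [consPerm, Equiv.Perm.inv_def]

@[simp] theorem consPerm_succ (k : Fin n) : consPerm i σ k.succ = i.succAbove (σ k) := by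
  simp [consPerm, Equiv.Perm.inv_def]

theorem sign_consPerm :
    (Equiv.Perm.sign (consPerm i σ) : ℤ) = (-1) ^ (i : ℕ) * (Equiv.Perm.sign σ : ℤ) := by
  simp [consPerm, Fin.sign_cycleRange]

theorem bijective_consPerm :
    Function.Bijective fun q : Fin (n + 1) × Equiv.Perm (Fin n) => consPerm q.1 q.2 := by
  rw [Fintype.bijective_iff_injective_and_card]
  refine ⟨fun ⟨i, σ⟩ ⟨j, τ⟩ h => ?_, by simp [Fintype.card_perm, Nat.factorial_succ]⟩
  have hval (k : Fin (n + 1)) : consPerm i σ k = consPerm j τ k := DFunLike.congr_fun h k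
  obtain rfl : i = j := by simpa using hval 0
  refine Prod.ext rfl (Equiv.ext fun k => ?_)
  simpa using hval k.succ

theorem alternate_ofFn {L B : Type*} [AddCommGroup B] (x : WordForm L B) (v : Fin n → L) :
    alternate n x (List.ofFn v) =
      ∑ τ : Equiv.Perm (Fin n), (Equiv.Perm.sign τ : ℤ) • x (List.ofFn (v ∘ τ)) := by
  induction n generalizing x with
  | zero => simp [alternate_zero]
  | succ n ih =>
    rw [alternate_succ, headAlt_ofFn, ← bijective_consPerm.sum_comp, Fintype.sum_prod_type]
    refine Finset.sum_congr rfl fun i _ => ?_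
    rw [ih, Finset.smul_sum]
    refine Finset.sum_congr rfl fun σ _ => ?_
    rw [sign_consPerm, List.ofFn_succ (n := n), smul_smul]
    simp only [Function.comp_def, consPerm_zero, consPerm_succ, contract_apply]

end Perm

section Wedge

variable {L B : Type*} [Ring B]

theorem headAlt_mul (G : L → WordForm L B) (y : WordForm L B) :
    headAlt (fun b => G b * y) = headAlt G * y := by
  funext l
  induction l generalizing G y with
  | nil => simp
  | cons a l ih =>
    have hadd : (fun b => contract a (G b * y)) =
        (fun b => contract a (G b) * y) + fun b => involute (G b) * contract a y := rfl
    have hinv : involute (headAlt G) = -headAlt fun b => involute (G b) := by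
      rw [headAlt_involute, neg_neg]
    rw [headAlt_cons, hadd, map_add, add_apply, ih, ih, mul_cons, contract_headAlt, hinv, sub_mul,
      neg_mul, sub_apply, neg_apply]
    abel

theorem contract_const_mul (a : L) (c : B) (y : WordForm L B) :
    contract a (const c * y) = const c * contract a y := by
  rw [contract_mul, contract_const, zero_mul, zero_add, involute_const]

theorem headAlt_const_mul (c : B) (G : L → WordForm L B) :
    headAlt (fun b => const c * G b) = const c * headAlt G := by
  funext l
  induction l generalizing G with
  | nil => simp
  | cons a l ih =>
    simp only [headAlt_cons, const_mul_apply, contract_const_mul, ih, mul_sub]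

theorem alternate_const_mul (n : ℕ) (c : B) (y : WordForm L B) :
    alternate n (const c * y) = const c * alternate n y := by
  induction n generalizing y with
  | zero =>
    refine ext_contract (by simp [alternate_zero]) fun a => ?_
    rw [alternate_zero, alternate_zero, contract_const_mul, contract_const, contract_const,
      mul_zero]
  | succ n ih => simp only [alternate_succ, contract_const_mul, ih, headAlt_const_mul]

/-- The concatenation product, giving the first `m` arguments to the first factor. -/
def concatMul (m : ℕ) (x y : WordForm L B) : WordForm L B :=
  fun l => x (l.take m) * y (l.drop m)

theorem concatMul_zero (x y : WordForm L B) : concatMul 0 x y = const (x []) * y :=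
  funext fun l => (const_mul_apply (x []) y l).symm

theorem alternate_concatMul (m n : ℕ) (x y : WordForm L B) :
    alternate (m + n) (concatMul m x y) = alternate m x * alternate n y := by
  induction m generalizing x with
  | zero => rw [concatMul_zero, zero_add, alternate_const_mul, alternate_zero]
  | succ m ih =>
    rw [Nat.succ_add, alternate_succ, alternate_succ, ← headAlt_mul]
    exact congrArg headAlt (funext fun b => ih (contract b x))

theorem concatMul_ofFn {m n : ℕ} (x y : WordForm L B) (v : Fin (m + n) → L) :
    concatMul m x y (List.ofFn v) = x (List.ofFn fun i => v (Fin.castAdd n i)) *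
      y (List.ofFn fun j => v (Fin.natAdd m j)) := by
  rw [List.ofFn_add, concatMul, List.take_left' (by simp), List.drop_left' (by simp)]
  rfl

variable {R : Type*} [CommRing R] [Algebra R B] [AddCommGroup L] [Module R L]
  {m n : ℕ} {x y : WordForm L B}

theorem IsAlternating.factorial_smul_mul_ofFn (hx : IsAlternating R m x)
    (hy : IsAlternating R n y) (v : Fin (m + n) → L) :
    (m.factorial * n.factorial) • (x * y : WordForm L B) (List.ofFn v) =
      ∑ τ : Equiv.Perm (Fin (m + n)), (Equiv.Perm.sign τ : ℤ) •
        (x (List.ofFn fun i => v (τ (Fin.castAdd n i))) *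
          y (List.ofFn fun j => v (τ (Fin.natAdd m j)))) := by
  have h := alternate_ofFn (concatMul m x y) v
  rw [alternate_concatMul, hx.alternate_eq, hy.alternate_eq, smul_mul_smul_comm,
    nsmul_apply] at h
  simpa only [concatMul_ofFn, Function.comp_apply] using h

end Wedge

section Differential

variable {R L B : Type*} [CommRing R] [LieRing L] [LieAlgebra R L] [AddCommGroup B] [Module R B]
  {n : ℕ} {x : WordForm L B} (act : L →ₗ[R] Module.End R B)

theorem lieDeriv_eq_map_add (a : L) (x : WordForm L B) :
    lieDeriv act a x = map (act a) x + lieDeriv (0 : L →ₗ[R] Module.End R B) a x := by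
  funext l
  induction l generalizing x with
  | nil => simp
  | cons b l ih =>
    rw [lieDeriv_cons, ih, add_apply, add_apply, lieDeriv_cons, map_apply, map_apply,
      contract_apply, add_sub_assoc]

theorem diff_eq_headAlt_add (x : WordForm L B) :
    diff act x = headAlt (fun a => map (act a) x) + diff (0 : L →ₗ[R] Module.End R B) x := by
  funext l
  induction l generalizing x with
  | nil => simp
  | cons a l ih =>
    simp only [diff_cons, lieDeriv_eq_map_add act a x, ih, add_apply, headAlt_cons, contract_map]
    abel

theorem IsAlternating.lieDeriv_zero (hx : IsAlternating R n x) (a : L) :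
    lieDeriv (0 : L →ₗ[R] Module.End R B) a x =
      -headAlt fun b => WordForm.contract ⁅a, b⁆ x := by
  funext l
  induction l generalizing n x with
  | nil => simp
  | cons b l ih =>
    have hswap : (fun c => WordForm.contract b (WordForm.contract ⁅a, c⁆ x)) =
        -fun c => WordForm.contract ⁅a, c⁆ (WordForm.contract b x) :=
      funext fun c => hx.contract_contract b ⁅a, c⁆
    rw [lieDeriv_cons, ih (hx.contract b), neg_apply, neg_apply, headAlt_cons, hswap,
      _root_.map_neg, neg_apply]
    abel

/-- The `(i, j)` summand of the bracket part of the Chevalley–Eilenberg differential. -/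
def bracketTerm (x : WordForm L B) (v : Fin (n + 2) → L) (i j : Fin (n + 2)) : B :=
  if h : (i : ℕ) < (j : ℕ) then
    (-1 : ℤ) ^ ((i : ℕ) + (j : ℕ)) • contract ⁅v i, v j⁆ x (List.ofFn fun k : Fin n =>
      v (j.succAbove ((⟨i, by omega⟩ : Fin (n + 1)).succAbove k)))
  else 0

theorem bracketTerm_zero_right (x : WordForm L B) (v : Fin (n + 2) → L) (i : Fin (n + 2)) :
    bracketTerm x v i 0 = 0 :=
  dif_neg (Nat.not_lt_zero _)

theorem bracketTerm_zero_succ (x : WordForm L B) (v : Fin (n + 2) → L) (j : Fin (n + 1)) :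
    bracketTerm x v 0 j.succ = -((-1 : ℤ) ^ (j : ℕ) •
      contract ⁅v 0, v j.succ⁆ x (List.ofFn fun k => Fin.tail v (j.succAbove k))) := by
  rw [bracketTerm, dif_pos (by simp)]
  simp [pow_succ, Fin.tail]

theorem IsAlternating.bracketTerm_succ_succ {m : ℕ} (hx : IsAlternating R m x)
    (v : Fin (n + 3) → L) (i j : Fin (n + 2)) :
    bracketTerm x v i.succ j.succ = -bracketTerm (WordForm.contract (v 0) x) (Fin.tail v) i j := by
  unfold bracketTerm
  split_ifs with hlt hlt' hlt'
  · have hsign : (-1 : ℤ) ^ ((i.succ : ℕ) + (j.succ : ℕ)) = (-1) ^ ((i : ℕ) + (j : ℕ)) := by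
      rw [Fin.val_succ, Fin.val_succ, add_add_add_comm, pow_add _ _ (1 + 1), neg_one_sq, mul_one]
    have hfin : (⟨(i.succ : ℕ), by omega⟩ : Fin (n + 2)) = (⟨i, by omega⟩ : Fin (n + 1)).succ := rfl
    rw [hsign, hfin, List.ofFn_succ, ← smul_neg]
    simp only [Fin.succ_succAbove_zero, Fin.succ_succAbove_succ]
    exact congrArg _ (congrFun (hx.contract_contract (v 0) ⁅v i.succ, v j.succ⁆) _)
  · exact absurd (by simpa using hlt) hlt'
  · exact absurd (by simpa using hlt') hlt
  · exact neg_zero.symm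

theorem IsAlternating.sum_bracketTerm_eq_add {m : ℕ} (hx : IsAlternating R m x)
    (v : Fin (n + 2) → L) :
    ∑ i, ∑ j, bracketTerm x v i j =
      lieDeriv (0 : L →ₗ[R] Module.End R B) (v 0) x (List.ofFn (Fin.tail v)) +
        ∑ i : Fin (n + 1), ∑ j : Fin (n + 1), bracketTerm x v i.succ j.succ := by
  have hfirst : ∑ j : Fin (n + 1), bracketTerm x v 0 j.succ =
      lieDeriv (0 : L →ₗ[R] Module.End R B) (v 0) x (List.ofFn (Fin.tail v)) := by
    rw [hx.lieDeriv_zero, neg_apply, headAlt_ofFn, ← Finset.sum_neg_distrib]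
    exact Finset.sum_congr rfl fun j _ => bracketTerm_zero_succ x v j
  simp only [← hfirst, Fin.sum_univ_succ (n := n + 1), bracketTerm_zero_right, zero_add]

theorem IsAlternating.sum_bracketTerm {m : ℕ} (hx : IsAlternating R m x) (v : Fin (n + 2) → L) :
    ∑ i, ∑ j, bracketTerm x v i j =
      diff (0 : L →ₗ[R] Module.End R B) x (List.ofFn v) := by
  induction n generalizing m x with
  | zero => simp [bracketTerm, diff_cons, lieDeriv_cons]
  | succ n ih =>
    simp only [hx.sum_bracketTerm_eq_add, hx.bracketTerm_succ_succ, Finset.sum_neg_distrib,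
      ih (hx.contract (v 0)), ← sub_eq_add_neg]
    rw [List.ofFn_succ (f := v)]
    rfl

theorem IsAlternating.dGen_ofFn (hx : IsAlternating R n x) (v : Fin (n + 1) → L) :
    dGen (fun a b => act a b) (fun w : Fin n → L => x (List.ofFn w)) v =
      diff act x (List.ofFn v) := by
  cases n with
  | zero => simp [dGen, diff_cons]
  | succ n =>
    rw [diff_eq_headAlt_add, add_apply, headAlt_ofFn, ← hx.sum_bracketTerm, dGen]
    simp only [List.ofFn_cons]
    rfl

end Differential

end WordForm

namespace WordForm

variable {R L B : Type*} [CommRing R] [LieRing L] [LieAlgebra R L] [AddCommGroup B] [Module R B]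

theorem isAlternating_diff_oneForm (act : L →ₗ[R] Module.End R B) (α : L →ₗ[R] B) :
    IsAlternating R 2 (diff act (oneForm α)) := by
  let φ : L →ₗ[R] L →ₗ[R] B :=
    LinearMap.mk₂ R (fun a b => act a (α b) - α ⁅a, b⁆ - act b (α a))
      (fun a a' b => by simp only [map_add, add_lie, LinearMap.add_apply]; abel)
      (fun c a b => by simp only [map_smul, smul_lie, LinearMap.smul_apply, smul_sub])
      (fun a b b' => by simp only [map_add, lie_add, LinearMap.add_apply]; abel)
      (fun c a b => by simp only [map_smul, lie_smul, LinearMap.smul_apply, smul_sub])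
  have hφ (a : L) : contract a (diff act (oneForm α)) = oneForm (φ a) :=
    contract_diff_oneForm act a α
  refine ⟨rfl, ⟨fun a b => ?_, fun c a => ?_⟩, fun a => ?_, fun a => ?_⟩
  · rw [hφ, hφ, hφ, map_add, ← oneForm_add]
    rfl
  · rw [hφ, hφ, map_smul]
    exact ext_contract (smul_zero c).symm fun b => ext_contract rfl fun _ => (smul_zero c).symm
  · rw [hφ, contract_oneForm]
    simp [φ]
  · rw [hφ]
    exact isAlternating_oneForm (φ a)

end WordForm

namespace TracedAction

open WordForm Polynomial

section Curvature

variable {R L A M : Type*} [CommRing R] [LieRing L] [LieAlgebra R L] [Ring A] [Algebra R A]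
  [AddCommGroup M] [Module R M] (T : TracedAction R L A M)

theorem isAlternating_curvature (α : L →ₗ[R] A) : IsAlternating R 2 (T.curvature α) :=
  (isAlternating_diff_oneForm T.act α).add
    ((isAlternating_oneForm α).mul (isAlternating_oneForm α))

theorem isAlternating_transgression (α β : L →ₗ[R] A) (n : ℕ) :
    IsAlternating R (2 * n + 1) (T.transgression α β n) :=
  add_comm 1 (2 * n) ▸
    ((isAlternating_oneForm β).mul ((T.isAlternating_curvature α).pow n)).map T.tr

theorem isAlternating_transgression₂ (α β γ : L →ₗ[R] A) (n : ℕ) :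
    IsAlternating R (2 * n) (T.transgression₂ α β γ n) := by
  cases n with
  | zero =>
    rw [transgression₂, powDeriv_zero, mul_zero (oneForm β), _root_.map_zero]
    exact isAlternating_zero R _
  | succ n =>
    have hdeg : 1 + (2 * n + 1) = 2 * (n + 1) := by ring
    exact hdeg ▸ ((isAlternating_oneForm β).mul
      ((T.isAlternating_curvature α).powDeriv (isAlternating_oneForm γ) n)).map T.tr

theorem curvature_pair (α : L →ₗ[R] A) (a b : L) :
    T.curvature α [a, b] =
      T.act a (α b) - α ⁅a, b⁆ - T.act b (α a) + (α a * α b - α b * α a) := by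
  have hdiff : diff T.act (oneForm α) [a, b] = T.act a (α b) - α ⁅a, b⁆ - T.act b (α a) :=
    congrFun (contract_diff_oneForm T.act a α) [b]
  have hsq : (oneForm α * oneForm α : WordForm L A) [a, b] = α a * α b - α b * α a := by
    simp [mul_cons, mul_nil, sub_eq_add_neg]
  rw [curvature, WordForm.add_apply, hdiff, hsq]

end Curvature

section ChernSimons

variable {𝕜 L A M : Type*} [Field 𝕜] [LieRing L] [LieAlgebra 𝕜 L] [Ring A] [Algebra 𝕜 A]
  [AddCommGroup M] [Module 𝕜 M] (T : TracedAction 𝕜 L A M)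

theorem isAlternating_csForm (β₀ β₁ : L →ₗ[𝕜] A) (n : ℕ) :
    IsAlternating 𝕜 (2 * n + 1) (T.csForm β₀ β₁ n) :=
  ((T.baseChange 𝕜[X]).isAlternating_transgression _ _ n).map _

theorem isAlternating_csTriangle (β₀ β₁ β₂ : L →ₗ[𝕜] A) (n : ℕ) :
    IsAlternating 𝕜 (2 * n) (T.csTriangle β₀ β₁ β₂ n) :=
  ((((T.baseChange 𝕜[X]).baseChange 𝕜[X]).isAlternating_transgression₂ _ _ _ n).map _).map _

theorem specialize_aeval_transgression_path (β : L →ₗ[𝕜] A) (n : ℕ) (t : 𝕜) :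
    map (specialize M (aeval t).toLinearMap)
      ((T.baseChange 𝕜[X]).transgression (path 0 β) (family (β - 0) 1) n) =
        T.transgression (t • β) β n := by
  have hpath : (T.evaluation (aeval t)).onA.toLinearMap ∘ₗ path 0 β = t • β := by
    refine LinearMap.ext fun a => ?_
    simp [evaluation, path, family_apply]
  have h := (T.evaluation (aeval t)).map_transgression (path 0 β) (family (β - 0) 1) n
  rw [hpath, evaluation_comp_family_one] at h
  exact h.trans (by rw [sub_zero])

end ChernSimons

end TracedAction

section PolynomialFamilies

open Polynomial TracedAction

theorem specialize_polyEquivTensor {R A : Type*} [CommRing R] [Ring A] [Algebra R A]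
    (φ : R[X] →ₗ[R] R) (P : A[X]) :
    specialize A φ (polyEquivTensor R A P) = P.sum fun k c => φ (X ^ k) • c := by
  rw [polyEquivTensor_apply, eval₂_eq_sum, Polynomial.sum, Polynomial.sum, map_sum]
  refine Finset.sum_congr rfl fun k _ => ?_
  simp

/-- Applying a linear functional to the coefficients reduces this to scalar polynomials. -/
theorem eq_zero_of_eval_algebraMap_eq_zero {𝕜 A : Type*} [Field 𝕜] [Infinite 𝕜] [CommRing A]
    [Algebra 𝕜 A] {P : A[X]} (h : ∀ t : 𝕜, P.eval (algebraMap 𝕜 A t) = 0) : P = 0 := by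
  ext k
  rw [coeff_zero, ← forall_dual_apply_eq_zero_iff 𝕜]
  intro φ
  let q : 𝕜[X] := ∑ i ∈ Finset.range (P.natDegree + 1), monomial i (φ (P.coeff i))
  have hq : q = 0 := Polynomial.funext fun t => by
    have ht := congrArg φ (h t)
    rw [eval_eq_sum_range, map_sum, map_zero] at ht
    rw [eval_finsetSum, eval_zero, ← ht]
    refine Finset.sum_congr rfl fun i _ => ?_
    rw [eval_monomial, ← map_pow, mul_comm (P.coeff i), ← Algebra.smul_def, map_smul, smul_eq_mul,
      mul_comm]
  by_cases hk : k < P.natDegree + 1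
  · simpa [q, finsetSum_coeff, coeff_monomial, hk] using congrArg (coeff · k) hq
  · rw [coeff_eq_zero_of_natDegree_lt (by omega), map_zero]

variable {C : Type*} [CommRing C] [Algebra ℝ C]

theorem intPolyTo_eval (s : ℝ) (P : C[X]) :
    intPolyTo s (fun t => P.eval (algebraMap ℝ C t)) =
      P.sum fun k c => (s ^ (k + 1) / ((k : ℝ) + 1)) • c := by
  have hex : ∃ Q : C[X], ∀ t : ℝ, P.eval (algebraMap ℝ C t) = Q.eval (algebraMap ℝ C t) :=
    ⟨P, fun t => rfl⟩
  have hP : hex.choose = P := sub_eq_zero.mp <| eq_zero_of_eval_algebraMap_eq_zero fun t : ℝ => by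
    rw [eval_sub, ← hex.choose_spec t, sub_self]
  rw [intPolyTo, dif_pos hex, hP, sum_over_range _ fun k => smul_zero _]

theorem intPolyTo_specialize (u : TensorProduct ℝ C ℝ[X]) :
    intPolyTo 1 (fun t => specialize C (aeval t).toLinearMap u) = specialize C unitIntegral u := by
  obtain ⟨P, rfl⟩ := (polyEquivTensor ℝ C).surjective u
  have heval (t : ℝ) : specialize C (aeval t).toLinearMap (polyEquivTensor ℝ C P) =
      P.eval (algebraMap ℝ C t) := by
    rw [specialize_polyEquivTensor, eval_eq_sum]
    simp [Algebra.smul_def, mul_comm]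
  simp only [heval]
  rw [intPolyTo_eval, specialize_polyEquivTensor]
  simp [← monomial_one_right_eq_X_pow, unitIntegral_monomial]

end PolynomialFamilies

theorem trace_eq_sum_repr {C E ι : Type*} [CommRing C] [AddCommGroup E] [Module C E] [Fintype ι]
    (b : Basis ι C E) (X : Module.End C E) :
    LinearMap.trace C E X = ∑ i, b.repr (X (b i)) i := by
  classical
  simp [LinearMap.trace_eq_matrix_trace C b, Matrix.trace, LinearMap.toMatrix_apply]

section Connection

variable {L C E ι : Type*} [LieRing L] [LieAlgebra ℝ L] [CommRing C] [Algebra ℝ C]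
  [AddCommGroup E] [Module ℝ E] [Module C E] {ρ : L →ₗ[ℝ] Derivation ℝ C C}
  {D D₀ D₁ : L →ₗ[ℝ] Module.End ℝ E}

theorem IsConn.add_smul_sub [IsScalarTower ℝ C E] (h₀ : IsConn ρ D₀) (h₁ : IsConn ρ D₁) (t : ℝ) :
    IsConn ρ (D₀ + t • (D₁ - D₀)) := fun a f e => by
  simp only [LinearMap.add_apply, LinearMap.smul_apply, LinearMap.sub_apply, h₀ a f e, h₁ a f e,
    add_sub_add_right_eq_sub, ← smul_sub, smul_comm t f, smul_add]
  abel

variable [IsScalarTower ℝ C E]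

namespace IsConn

/-- The difference `D₁ - D₀` of two connections, which has `C`-linear values. -/
def difference (h₀ : IsConn ρ D₀) (h₁ : IsConn ρ D₁) : L →ₗ[ℝ] Module.End C E where
  toFun a :=
    { D₁ a - D₀ a with
      map_smul' := fun f e => by
        simp [h₀ a f, h₁ a f, smul_sub] }
  map_add' a b := LinearMap.ext fun e => congr($((D₁ - D₀).map_add a b) e)
  map_smul' r a := LinearMap.ext fun e => congr($((D₁ - D₀).map_smul r a) e)

theorem difference_apply (h₀ : IsConn ρ D₀) (h₁ : IsConn ρ D₁) (a : L) (e : E) :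
    h₀.difference h₁ a e = D₁ a e - D₀ a e := rfl

theorem difference_add_smul_sub (h₀ : IsConn ρ D₀) (h₁ : IsConn ρ D₁) (t : ℝ) :
    h₀.difference (h₀.add_smul_sub h₁ t) = t • h₀.difference h₁ := by
  ext a e
  simp [difference_apply]

/-- The connection `[D, ·]` induced by `D` on the endomorphisms of `E`. -/
def commutator (hD : IsConn ρ D) : L →ₗ[ℝ] Module.End ℝ (Module.End C E) :=
  LinearMap.mk₂ ℝ (fun a X =>
      { D a ∘ₗ X.restrictScalars ℝ - X.restrictScalars ℝ ∘ₗ D a with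
        map_smul' := fun f e => by simp [hD a f, smul_sub] })
    (fun a b X => LinearMap.ext fun e => by
      simp only [map_add, LinearMap.coe_mk, LinearMap.coe_toAddHom, LinearMap.sub_apply,
        LinearMap.coe_comp, LinearMap.coe_restrictScalars, Function.comp_apply,
        LinearMap.add_apply]
      abel)
    (fun r a X => LinearMap.ext fun e => by simp [smul_sub])
    (fun a X Y => LinearMap.ext fun e => by
      simp only [LinearMap.restrictScalars_add, LinearMap.coe_mk, LinearMap.coe_toAddHom,
        LinearMap.sub_apply, LinearMap.coe_comp, Function.comp_apply, LinearMap.add_apply,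
        LinearMap.coe_restrictScalars, map_add]
      abel)
    (fun r a X => LinearMap.ext fun e => by simp [smul_sub])

theorem commutator_apply (hD : IsConn ρ D) (a : L) (X : Module.End C E) (e : E) :
    hD.commutator a X e = D a (X e) - X (D a e) := rfl

theorem commutator_mul (hD : IsConn ρ D) (a : L) (X Y : Module.End C E) :
    hD.commutator a (X * Y) = hD.commutator a X * Y + X * hD.commutator a Y := by
  ext e
  simp [commutator_apply]

theorem commutator_eq_add_lie (h₀ : IsConn ρ D₀) (h₁ : IsConn ρ D₁) (a : L) (X : Module.End C E) :
    h₁.commutator a X = h₀.commutator a X + ⁅h₀.difference h₁ a, X⁆ := by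
  ext e
  simp only [commutator_apply, difference_apply, Ring.lie_def, LinearMap.add_apply,
    LinearMap.sub_apply, End.mul_apply, map_sub]
  abel

theorem apply_lie_of_flat (hflat : ∀ a b, curv D a b = 0) (a b : L) :
    D ⁅a, b⁆ = ⁅D a, D b⁆ :=
  (sub_eq_zero.mp (hflat a b)).symm

theorem commutator_lie (hD : IsConn ρ D) (hflat : ∀ a b, curv D a b = 0) (a b : L) :
    hD.commutator ⁅a, b⁆ = ⁅hD.commutator a, hD.commutator b⁆ := by
  ext X e
  simp only [commutator_apply, apply_lie_of_flat hflat, Ring.lie_def, LinearMap.sub_apply,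
    End.mul_apply, map_sub]
  abel

end IsConn

section Trivialization

variable [Fintype ι] (b : Basis ι C E)

/-- The connection differentiating the coordinates in the basis `b`. -/
noncomputable def coordConn (ρ : L →ₗ[ℝ] Derivation ℝ C C) : L →ₗ[ℝ] Module.End ℝ E :=
  LinearMap.mk₂ ℝ (fun a e => b.equivFun.symm fun j => ρ a (b.equivFun e j))
    (fun a a' e => by simp [add_smul, Finset.sum_add_distrib])
    (fun r a e => by simp [Finset.smul_sum])
    (fun a e e' => by simp [add_smul, Finset.sum_add_distrib])
    (fun r a e => by
      have h : b.repr (r • e) = r • b.repr e := (b.repr.toLinearMap.restrictScalars ℝ).map_smul r e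
      simp [h, Finset.smul_sum])

theorem repr_coordConn (a : L) (e : E) (j : ι) :
    b.repr (coordConn b ρ a e) j = ρ a (b.repr e j) :=
  congrFun (b.equivFun.apply_symm_apply fun j => ρ a (b.equivFun e j)) j

theorem isConn_coordConn : IsConn ρ (coordConn b ρ) := fun a f e =>
  b.ext_elem fun j => by simp [repr_coordConn, mul_comm (b.repr e j)]

theorem coordConn_basis (a : L) (i : ι) : coordConn b ρ a (b i) = 0 := by
  classical
  exact b.ext_elem fun j => by
    rw [repr_coordConn, b.repr_self, Finsupp.single_apply]
    split_ifs <;> simp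

theorem trace_commutator_coordConn (a : L) (X : Module.End C E) :
    LinearMap.trace C E ((isConn_coordConn (ρ := ρ) b).commutator a X) =
      ρ a (LinearMap.trace C E X) := by
  simp [trace_eq_sum_repr b, IsConn.commutator_apply, coordConn_basis, repr_coordConn]

end Trivialization

namespace IsConn

variable [Module.Finite C E] [Module.Free C E]

theorem trace_commutator (hD : IsConn ρ D) (a : L) (X : Module.End C E) :
    LinearMap.trace C E (hD.commutator a X) = ρ a (LinearMap.trace C E X) := by
  rw [(isConn_coordConn (Module.Free.chooseBasis C E)).commutator_eq_add_lie hD, map_add,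
    LinearMap.trace_lie, add_zero, trace_commutator_coordConn]

/-- The traced action on `End_C E` given by a flat connection on `E`. -/
noncomputable def tracedAction (hD : IsConn ρ D) (hflat : ∀ a b, curv D a b = 0) :
    TracedAction ℝ L (Module.End C E) C where
  act := hD.commutator
  actM := LinearMap.mk₂ ℝ (fun a f => ρ a f) (by simp) (by simp) (by simp) (by simp)
  tr := (LinearMap.trace C E).restrictScalars ℝ
  act_lie := hD.commutator_lie hflat
  act_mul := hD.commutator_mul
  tr_mul_comm := LinearMap.trace_mul_comm C
  tr_act := hD.trace_commutator

theorem curvature_pair_apply (hD : IsConn ρ D) (hflat : ∀ a b, curv D a b = 0) (h₁ : IsConn ρ D₁)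
    (a b : L) (e : E) :
    (hD.tracedAction hflat).curvature (hD.difference h₁) [a, b] e = curv D₁ a b e := by
  have hact : (hD.tracedAction hflat).act = hD.commutator := rfl
  rw [TracedAction.curvature_pair, hact]
  simp only [commutator_apply, difference_apply, curv, apply_lie_of_flat hflat, Ring.lie_def,
    LinearMap.add_apply, LinearMap.sub_apply, End.mul_apply, map_sub]
  abel

end IsConn

end Connection

section ChernSimonsPair

open WordForm Polynomial

theorem wedge_ofFn {L E : Type*} [AddCommGroup L] [Module ℝ L] [AddCommGroup E] [Module ℝ E]
    {m n : ℕ} {x y : WordForm L (Module.End ℝ E)} (hx : IsAlternating ℝ m x)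
    (hy : IsAlternating ℝ n y) (v : Fin (m + n) → L) :
    wedge (fun v => x (List.ofFn v)) (fun v => y (List.ofFn v)) v =
      (x * y : WordForm L (Module.End ℝ E)) (List.ofFn v) := by
  have hfactorial : ((m.factorial * n.factorial : ℕ) : ℝ) ≠ 0 := by positivity
  rw [wedge, ← hx.factorial_smul_mul_ofFn hy v, ← Nat.cast_smul_eq_nsmul ℝ, ← Nat.cast_mul,
    inv_smul_smul₀ hfactorial]

theorem wpow_ofFn {L E : Type*} [AddCommGroup L] [Module ℝ L] [AddCommGroup E] [Module ℝ E]
    {x : WordForm L (Module.End ℝ E)} (hx : IsAlternating ℝ 2 x) (n : ℕ) :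
    wpow (fun v => x (List.ofFn v)) n = fun v => (x ^ n) (List.ofFn v) := by
  induction n with
  | zero => rfl
  | succ n ih =>
    funext v
    rw [wpow, ih]
    beta_reduce
    rw [wedge_ofFn hx (hx.pow n), ← pow_succ',
      List.ofFn_congr (show 2 * (n + 1) = 2 + 2 * n by omega) v]

/-- Restriction of scalars from `C` to `ℝ`, as a homomorphism of endomorphism algebras. -/
def restrictEnd (C E : Type*) [CommRing C] [Algebra ℝ C] [AddCommGroup E] [Module ℝ E] [Module C E]
    [IsScalarTower ℝ C E] : Module.End C E →ₐ[ℝ] Module.End ℝ E :=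
  AlgHom.ofLinearMap (LinearMap.restrictScalarsₗ ℝ C E E ℝ) rfl fun _ _ => rfl

variable {L C E : Type*} [LieRing L] [LieAlgebra ℝ L] [CommRing C] [Algebra ℝ C]
  [AddCommGroup E] [Module ℝ E] [Module C E] [IsScalarTower ℝ C E]

theorem trR_restrictEnd (X : Module.End C E) :
    trR C (restrictEnd C E X) = LinearMap.trace C E X := by
  have hX : ∃ Y : Module.End C E, ⇑Y = ⇑(restrictEnd C E X) := ⟨X, rfl⟩
  rw [trR, dif_pos hX, DFunLike.coe_injective (hX.choose_spec.trans rfl : ⇑hX.choose = ⇑X)]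

namespace IsConn

variable [Module.Finite C E] [Module.Free C E] {ρ : L →ₗ[ℝ] Derivation ℝ C C}
  {D D₁ : L →ₗ[ℝ] Module.End ℝ E}

theorem trR_wedge_wpow_curv2 (hD : IsConn ρ D) (hflat : ∀ a b, curv D a b = 0) (h₁ : IsConn ρ D₁)
    (β : L →ₗ[ℝ] Module.End C E) (n : ℕ) (v : Fin (1 + 2 * n) → L) :
    trR C (wedge (fun w : Fin 1 → L => restrictEnd C E (β (w 0))) (wpow (curv2 D₁) n) v) =
      (hD.tracedAction hflat).transgression (hD.difference h₁) β n (List.ofFn v) := by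
  set R := (hD.tracedAction hflat).curvature (hD.difference h₁)
  set r := (restrictEnd C E).toLinearMap
  have hR : IsAlternating ℝ 2 R := TracedAction.isAlternating_curvature _ _
  have hcurv : curv2 D₁ = fun w => WordForm.map r R (List.ofFn w) :=
    funext fun w => LinearMap.ext fun e => (hD.curvature_pair_apply hflat h₁ (w 0) (w 1) e).symm
  have hmul : WordForm.map r (oneForm β) * WordForm.map r R ^ n =
      WordForm.map (restrictEnd C E) (oneForm β * R ^ n) := by
    rw [WordForm.map_mul, WordForm.map_pow]
    rfl
  have hwedge := wedge_ofFn ((isAlternating_oneForm β).map r) ((hR.map r).pow n) v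
  rw [← wpow_ofFn (hR.map r), hmul, ← hcurv] at hwedge
  exact (congrArg (trR C) hwedge).trans (trR_restrictEnd _)

theorem dRho_ofFn (hD : IsConn ρ D) (hflat : ∀ a b, curv D a b = 0) {n : ℕ} {x : WordForm L C}
    (hx : IsAlternating ℝ n x) (v : Fin (n + 1) → L) :
    dRho ρ (fun w : Fin n → L => x (List.ofFn w)) v =
      diff (hD.tracedAction hflat).actM x (List.ofFn v) :=
  hx.dGen_ofFn (hD.tracedAction hflat).actM v

theorem csPair_add_one (hD : IsConn ρ D) (hflat : ∀ a b, curv D a b = 0) (h₁ : IsConn ρ D₁)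
    (n : ℕ) (v : Fin (2 * n + 1) → L) :
    csPair C D D₁ (n + 1) v =
      ((n + 1) • (hD.tracedAction hflat).csForm 0 (hD.difference h₁) n) (List.ofFn v) := by
  set T := hD.tracedAction hflat
  set β := hD.difference h₁
  set u := (T.baseChange ℝ[X]).transgression (TracedAction.path 0 β)
    (TracedAction.family (β - 0) 1) n
  have hintegrand (t : ℝ) :
      trR C (wedge (fun w : Fin 1 → L => (D₁ - D) (w 0)) (wpow (curv2 (D + t • (D₁ - D))) n)
        fun i => v (Fin.cast (by omega) i)) =
          TracedAction.specialize C (aeval t).toLinearMap (u (List.ofFn v)) := by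
    have h := hD.trR_wedge_wpow_curv2 hflat (hD.add_smul_sub h₁ t) β n
      fun i => v (Fin.cast (by omega) i)
    rw [difference_add_smul_sub, ← T.specialize_aeval_transgression_path,
      ← List.ofFn_congr (by omega)] at h
    exact h
  rw [csPair, nsmul_apply, ← Nat.cast_smul_eq_nsmul ℝ]
  exact congrArg _ ((congrArg (intPolyTo 1) (funext hintegrand)).trans (intPolyTo_specialize _))

end IsConn

end ChernSimonsPair

section Adjoint

theorem eq_of_forall_isPerfPair_apply_eq {R M N : Type*} [CommRing R] [AddCommGroup M] [Module R M]
    [AddCommGroup N] [Module R N] (h : M →ₗ[R] N →ₗ[R] R) [h.IsPerfPair] {t t' : N}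
    (ht : ∀ s, h s t = h s t') : t = t' :=
  (LinearMap.IsPerfPair.bijective_right h).1 (LinearMap.ext ht)

variable {L C E : Type*} [LieRing L] [LieAlgebra ℝ L] [CommRing C] [Algebra ℝ C]
  [AddCommGroup E] [Module ℝ E] [Module C E]

/-- The connection `Dh` is adjoint to `D` with respect to the pairing `h`; a connection is metric
when it is adjoint to itself. -/
def IsAdjointConn (ρ : L →ₗ[ℝ] Derivation ℝ C C) (h : E →ₗ[C] E →ₗ[C] C)
    (D Dh : L →ₗ[ℝ] Module.End ℝ E) : Prop :=
  ∀ (a : L) (s t : E), ρ a (h s t) = h (D a s) t + h s (Dh a t)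

theorem IsAdjointConn.apply_right {ρ : L →ₗ[ℝ] Derivation ℝ C C} {h : E →ₗ[C] E →ₗ[C] C}
    {D Dh : L →ₗ[ℝ] Module.End ℝ E} (hadj : IsAdjointConn ρ h D Dh) (a : L) (s t : E) :
    h s (Dh a t) = ρ a (h s t) - h (D a s) t :=
  eq_sub_of_add_eq' (hadj a s t).symm

variable {ρ : L →ₗ[ℝ] Derivation ℝ C C} {h : E →ₗ[C] E →ₗ[C] C} [h.IsPerfPair]
  {D Dh Dm : L →ₗ[ℝ] Module.End ℝ E}

theorem IsAdjointConn.curv_eq_zero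
    (hρ : ∀ (a b : L) (f : C), ρ ⁅a, b⁆ f = ρ a (ρ b f) - ρ b (ρ a f))
    (hadj : IsAdjointConn ρ h D Dh) (hflat : ∀ a b, curv D a b = 0) (a b : L) :
    curv Dh a b = 0 := by
  refine LinearMap.ext fun t => eq_of_forall_isPerfPair_apply_eq h fun s => ?_
  have hs : h (curv D a b s) t = 0 := by rw [hflat, LinearMap.zero_apply, LinearMap.map_zero₂]
  simp only [curv, LinearMap.sub_apply, Module.End.mul_apply, LinearMap.zero_apply, map_sub,
    map_zero, hadj.apply_right, hρ] at hs ⊢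
  linear_combination -hs

variable [IsScalarTower ℝ C E] (h)

/-- The anti-automorphism of `End_C E` taking `X` to its adjoint with respect to the pairing `h`. -/
noncomputable def rightAdjoint : Module.End C E →ₗ[ℝ] Module.End C E :=
  (h.flip.toPerfPair.symm.conj.toLinearMap ∘ₗ Module.Dual.transpose (R := C)).restrictScalars ℝ

theorem apply_rightAdjoint (X : Module.End C E) (s t : E) :
    h s (rightAdjoint h X t) = h (X s) t :=
  h.apply_toPerfPair_flip _ s

theorem rightAdjoint_one : rightAdjoint h 1 = 1 :=
  LinearMap.ext fun t => eq_of_forall_isPerfPair_apply_eq h fun s => apply_rightAdjoint h 1 s t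

theorem rightAdjoint_mul (X Y : Module.End C E) :
    rightAdjoint h (X * Y) = rightAdjoint h Y * rightAdjoint h X :=
  LinearMap.ext fun t => eq_of_forall_isPerfPair_apply_eq h fun s => by
    simp only [apply_rightAdjoint, Module.End.mul_apply]

theorem trace_rightAdjoint [Module.Finite C E] [Module.Free C E] (X : Module.End C E) :
    LinearMap.trace C E (rightAdjoint h X) = LinearMap.trace C E X :=
  (LinearMap.trace_conj' _ _).trans (LinearMap.trace_transpose' X)

variable {h}

theorem IsAdjointConn.rightAdjoint_commutator (hadj : IsAdjointConn ρ h D Dh) (hD : IsConn ρ D)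
    (hDh : IsConn ρ Dh) (a : L) (X : Module.End C E) :
    rightAdjoint h (hD.commutator a X) = hDh.commutator a (rightAdjoint h X) := by
  refine LinearMap.ext fun t => eq_of_forall_isPerfPair_apply_eq h fun s => ?_
  simp only [apply_rightAdjoint, IsConn.commutator_apply, map_sub, LinearMap.sub_apply,
    hadj.apply_right]
  ring

/-- The adjoint structure on the traced action of a flat connection given by a perfect pairing. -/
noncomputable def IsAdjointConn.flatAdjoint [Module.Finite C E] [Module.Free C E]
    (hρ : ∀ (a b : L) (f : C), ρ ⁅a, b⁆ f = ρ a (ρ b f) - ρ b (ρ a f))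
    (hadj : IsAdjointConn ρ h D Dh) (hD : IsConn ρ D) (hDh : IsConn ρ Dh)
    (hflat : ∀ a b, curv D a b = 0) : (hD.tracedAction hflat).FlatAdjoint where
  star := rightAdjoint h
  conn := hD.difference hDh
  star_one := rightAdjoint_one h
  star_mul := rightAdjoint_mul h
  tr_star := trace_rightAdjoint h
  star_act a X := by
    change rightAdjoint h (hD.commutator a X) = hD.commutator a (rightAdjoint h X) + _ - _
    rw [hadj.rightAdjoint_commutator hD hDh, hD.commutator_eq_add_lie hDh, Ring.lie_def,
      add_sub_assoc]
  curvature_conn := by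
    have hR := (hD.tracedAction hflat).isAlternating_curvature (hD.difference hDh)
    funext l
    by_cases hl : l.length = 2
    · obtain ⟨a, b, rfl⟩ := List.length_eq_two.mp hl
      exact LinearMap.ext fun e => by
        rw [hD.curvature_pair_apply hflat hDh, hadj.curv_eq_zero hρ hflat]
        rfl
    · exact hR.apply_eq_zero hl

theorem IsAdjointConn.dual_difference_of_metric [Module.Finite C E] [Module.Free C E]
    (hρ : ∀ (a b : L) (f : C), ρ ⁅a, b⁆ f = ρ a (ρ b f) - ρ b (ρ a f))
    (hadj : IsAdjointConn ρ h D Dh) (hD : IsConn ρ D) (hDh : IsConn ρ Dh)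
    (hflat : ∀ a b, curv D a b = 0) (hDm : IsConn ρ Dm) (hmetric : IsAdjointConn ρ h Dm Dm) :
    (hadj.flatAdjoint hρ hD hDh hflat).dual (hD.difference hDm) = hD.difference hDm := by
  refine LinearMap.ext fun a => LinearMap.ext fun t =>
    eq_of_forall_isPerfPair_apply_eq h fun s => ?_
  change h s (hD.difference hDh a t - rightAdjoint h (hD.difference hDm a) t) = _
  simp only [map_sub, apply_rightAdjoint, IsConn.difference_apply, LinearMap.sub_apply,
    hadj.apply_right, hmetric.apply_right]
  ring

end Adjoint

theorem stmt16_general {L C E : Type*} [LieRing L] [LieAlgebra ℝ L] [CommRing C] [Algebra ℝ C]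
    [AddCommGroup E] [Module ℝ E] [Module C E] [IsScalarTower ℝ C E]
    [Module.Finite C E] [Module.Free C E] (ρ : L →ₗ[ℝ] Derivation ℝ C C)
    (hρ : ∀ (a b : L) (f : C), ρ ⁅a, b⁆ f = ρ a (ρ b f) - ρ b (ρ a f))
    (h : E →ₗ[C] E →ₗ[C] C) (hnd : Function.Bijective (⇑h))
    (D Dh Dm : L →ₗ[ℝ] Module.End ℝ E) (hD : IsConn ρ D) (hDh : IsConn ρ Dh) (hDm : IsConn ρ Dm)
    (hadj : IsAdjointConn ρ h D Dh) (hmetric : IsAdjointConn ρ h Dm Dm)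
    (hflat : ∀ a b : L, curv D a b = 0) (p : ℕ) (hpodd : Odd p) :
    dRho ρ (csPair C D Dm p) = 0 ∧
    ∃ η : AlternatingMap ℝ L C (Fin (2 * p - 2)),
      ∀ v : Fin (2 * (p - 1) + 1) → L,
        dRho ρ (⇑η) (fun i => v (Fin.cast (by omega) i))
          = csPair C D Dh p v - 2 • csPair C D Dm p v := by
  obtain ⟨n, rfl⟩ : ∃ n, p = n + 1 := Nat.exists_eq_add_one.mpr hpodd.pos
  have hn : Even n := by simpa [Nat.odd_add_one] using hpodd
  have : h.IsPerfPair := .of_bijective h hnd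
  let T := hD.tracedAction hflat
  let σ := hadj.flatAdjoint hρ hD hDh hflat
  let β := hD.difference hDm
  have hβ : σ.dual β = β := hadj.dual_difference_of_metric hρ hD hDh hflat hDm hmetric
  have hcs₀ := (T.isAlternating_csForm 0 β n).nsmul (n + 1)
  have hcs₁ := (T.isAlternating_csTriangle 0 σ.conn β n).nsmul (n + 1)
  obtain ⟨η, hη⟩ := hcs₁.exists_alternatingMap
  refine ⟨funext fun v => ?_, η, fun v => ?_⟩
  · rw [funext (hD.csPair_add_one hflat hDm n), hD.dRho_ofFn hflat hcs₀ v, map_nsmul,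
      σ.diff_csForm_eq_zero T.curvature_zero hβ hn, smul_zero]
    rfl
  · rw [hD.csPair_add_one hflat hDh, hD.csPair_add_one hflat hDm, funext hη]
    refine (hD.dRho_ofFn hflat hcs₁ v).trans ?_
    rw [map_nsmul, σ.diff_csTriangle_conn hβ hn, smul_sub, smul_comm]
    rfl

/-- for flat `∇`, odd `p`, and a metric ℝ-linear connection `∇_m`,
the form `cs_p(∇,∇_m)` is closed and `cs_p(∇,∇^h) − 2·cs_p(∇,∇_m)` is `d_ρ`-exact;
hence `u_{2p−1} = [2·cs_p(∇,∇_m)]`. -/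
theorem stmt16 {L : Type*} {C : Type*} {E : Type*}
    [LieRing L] [LieAlgebra ℝ L] [CommRing C] [Algebra ℝ C] [Module C L]
    [AddCommGroup E] [Module ℝ E] [Module C E] [IsScalarTower ℝ C E]
    [Module.Finite C E] [Module.Free C E]
    (ρ : L →ₗ[ℝ] Derivation ℝ C C)
    (hρ : ∀ (a b : L) (f : C), ρ ⁅a, b⁆ f = ρ a (ρ b f) - ρ b (ρ a f))
    (hLeib : ∀ (a b : L) (f : C), ⁅a, f • b⁆ = f • ⁅a, b⁆ + ρ a f • b)
    (h : E →ₗ[C] E →ₗ[C] C) (hsymm : ∀ s t : E, h s t = h t s)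
    (hnd : Function.Bijective (⇑h))
    (D Dh Dm : L →ₗ[ℝ] Module.End ℝ E)
    (hD : IsConn ρ D) (hDh : IsConn ρ Dh) (hDm : IsConn ρ Dm)
    (hadj : ∀ (a : L) (s t : E), ρ a (h s t) = h (D a s) t + h s (Dh a t))
    (hmetric : ∀ (a : L) (s t : E), ρ a (h s t) = h (Dm a s) t + h s (Dm a t))
    (hflat : ∀ a b : L, curv D a b = 0)
    (p : ℕ) (hp : 1 ≤ p) (hpodd : Odd p) :
    dRho ρ (csPair C D Dm p) = 0 ∧
    ∃ η : AlternatingMap ℝ L C (Fin (2 * p - 2)),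
      ∀ v : Fin (2 * (p - 1) + 1) → L,
        dRho ρ (⇑η) (fun i => v (Fin.cast (by omega) i))
          = csPair C D Dh p v - 2 • csPair C D Dm p v :=
  stmt16_general ρ hρ h hnd D Dh Dm hD hDh hDm hadj hmetric hflat p hpodd
end

section
/- If ∇⁰ and ∇¹ are both flat ℝ-linear connections of L on E and λ = ∇¹ − ∇⁰, then for every p ≥ 1: cs_p(∇⁰, ∇¹) = (−1)^{p+1} · (p!·(p−1)!/(2p−1)!) · Tr_*(λ^{∧(2p−1)}), where λ^{∧(2p−1)} is the (2p−1)-fold wedge power of the End_C(E)-valued 1-form λ. -/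
open Module

/-!
Along the segment `∇ᵗ = ∇⁰ + tλ` the curvature is `R_t = (1 - t) R₀ + t R₁ - t (1 - t) λ ∧ λ`, so
for flat endpoints only the last term survives and
`λ ∧ R_t^{∧(p-1)} = (-t (1 - t))^{p-1} λ^{∧(2p-1)}`. The integral of the scalar factor is the Beta
value `(-1)^{p-1} (p-1)!² / (2p-1)!`.

Powers of `λ` multiply because `λ^{∧n}` is the antisymmetrisation of the ordered product
`λ(a₁) ∘ ⋯ ∘ λ(aₙ)`. The algebraic integral of a `C`-valued polynomial is computed by testing
against `ℝ`-linear functionals on `C`, which turn it into an ordinary integral of a real function.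
-/

theorem apply_comp_finCast {L V : Type*} (ω : ∀ n, (Fin n → L) → V) {m n : ℕ} (h : m = n)
    (a : Fin n → L) : ω m (fun i => a (Fin.cast h i)) = ω n a := by
  subst h
  rfl

section Wedge

variable {L E : Type*} [AddCommGroup E] [Module ℝ E]

theorem wedge_smul_left {m n : ℕ} (r : ℝ) (ω : (Fin m → L) → Module.End ℝ E)
    (η : (Fin n → L) → Module.End ℝ E) : wedge (r • ω) η = r • wedge ω η := by
  funext a
  simp only [wedge, Pi.smul_apply, smul_mul_assoc, smul_comm _ r, ← Finset.smul_sum]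

theorem wedge_smul_right {m n : ℕ} (r : ℝ) (ω : (Fin m → L) → Module.End ℝ E)
    (η : (Fin n → L) → Module.End ℝ E) : wedge ω (r • η) = r • wedge ω η := by
  funext a
  simp only [wedge, Pi.smul_apply, mul_smul_comm, smul_comm _ r, ← Finset.smul_sum]

theorem wpow_smul (r : ℝ) (R : (Fin 2 → L) → Module.End ℝ E) (k : ℕ) :
    wpow (r • R) k = r ^ k • wpow R k := by
  induction k with
  | zero => simp [wpow]
  | succ k ih =>
    funext a
    simp only [wpow, ih, wedge_smul_left, wedge_smul_right, smul_smul, pow_succ, Pi.smul_apply]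

end Wedge

section AlternatingPower

open scoped Nat

variable {L E : Type*} [AddCommGroup L] [Module ℝ L] [AddCommGroup E] [Module ℝ E]

theorem wedge_eq_alternatization_domCoprod {m n : ℕ}
    (f : MultilinearMap ℝ (fun _ : Fin m => L) (Module.End ℝ E))
    (g : MultilinearMap ℝ (fun _ : Fin n => L) (Module.End ℝ E)) (a : Fin (m + n) → L) :
    wedge f g a = (m ! * n ! : ℝ)⁻¹ • LinearMap.mul' ℝ (Module.End ℝ E)
      (MultilinearMap.alternatization (f.domCoprod g) (a ∘ finSumFinEquiv)) := by
  simp only [wedge, MultilinearMap.alternatization_apply, map_sum]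
  congr 1
  refine (Fintype.sum_equiv finSumFinEquiv.permCongr _ _ fun τ => ?_).symm
  simp only [MultilinearMap.domDomCongr_apply, MultilinearMap.domCoprod_apply, Units.smul_def,
    map_zsmul, LinearMap.mul'_apply, Equiv.Perm.sign_permCongr]
  simp

theorem wedge_alternatization {m n : ℕ}
    (f : MultilinearMap ℝ (fun _ : Fin m => L) (Module.End ℝ E))
    (g : MultilinearMap ℝ (fun _ : Fin n => L) (Module.End ℝ E)) :
    wedge f.alternatization g.alternatization = (m ! * n ! : ℝ) • wedge f g := by
  funext a
  have h := wedge_eq_alternatization_domCoprod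
    (f.alternatization : MultilinearMap ℝ (fun _ => L) (Module.End ℝ E))
    (g.alternatization : MultilinearMap ℝ (fun _ => L) (Module.End ℝ E)) a
  rw [MultilinearMap.domCoprod_alternization_eq, ← MultilinearMap.domCoprod_alternization] at h
  rw [Pi.smul_apply, wedge_eq_alternatization_domCoprod, smul_comm, ← map_smul]
  simpa [← Nat.cast_smul_eq_nsmul ℝ] using h

/-- The antisymmetrised ordered product
`(a₁, …, aₙ) ↦ ∑ τ, sgn τ • θ(a_{τ(1)}) ∘ ⋯ ∘ θ(a_{τ(n)})`: the closed form of the wedge power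
`wpow1 θ n`, which makes the wedge powers visibly multiplicative. -/
noncomputable def altPow (θ : L →ₗ[ℝ] Module.End ℝ E) (n : ℕ) : L [⋀^Fin n]→ₗ[ℝ] Module.End ℝ E :=
  MultilinearMap.alternatization
    ((MultilinearMap.mkPiAlgebraFin ℝ n (Module.End ℝ E)).compLinearMap fun _ => θ)

theorem altPow_apply (θ : L →ₗ[ℝ] Module.End ℝ E) (n : ℕ) (a : Fin n → L) :
    altPow θ n a = ∑ τ : Equiv.Perm (Fin n),
      Equiv.Perm.sign τ • (List.ofFn fun i => θ (a (τ i))).prod := by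
  simp [altPow, MultilinearMap.alternatization_apply]

theorem wedge_altPow (θ : L →ₗ[ℝ] Module.End ℝ E) (m n : ℕ) :
    wedge (altPow θ m) (altPow θ n) = altPow θ (m + n) := by
  funext a
  rw [altPow, altPow, wedge_alternatization, Pi.smul_apply, wedge, smul_inv_smul₀ (by positivity),
    altPow_apply]
  refine Finset.sum_congr rfl fun τ _ => ?_
  rw [List.ofFn_add, List.prod_append]
  rfl

theorem altPow_zero (θ : L →ₗ[ℝ] Module.End ℝ E) (a : Fin 0 → L) : altPow θ 0 a = 1 := by
  simp [altPow_apply]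

theorem altPow_one (θ : L →ₗ[ℝ] Module.End ℝ E) (a : Fin 1 → L) : altPow θ 1 a = θ (a 0) := by
  simp [altPow_apply]

theorem wpow1_eq_altPow (θ : L →ₗ[ℝ] Module.End ℝ E) (n : ℕ) :
    wpow1 (fun u => θ (u 0)) n = altPow θ n := by
  induction n with
  | zero => exact funext fun a => (altPow_zero θ a).symm
  | succ n ih =>
    have hone : (fun u : Fin 1 → L => θ (u 0)) = altPow θ 1 :=
      funext fun u => (altPow_one θ u).symm
    funext a
    rw [wpow1, ih, hone, wedge_altPow]
    exact apply_comp_finCast (fun k => altPow θ k) _ a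

theorem wpow1_one (θ : L →ₗ[ℝ] Module.End ℝ E) :
    wpow1 (fun u => θ (u 0)) 1 = fun u => θ (u 0) := by
  rw [wpow1_eq_altPow]
  exact funext (altPow_one θ)

theorem wpow1_two_apply (θ : L →ₗ[ℝ] Module.End ℝ E) (a : Fin 2 → L) :
    wpow1 (fun u => θ (u 0)) 2 a = θ (a 0) * θ (a 1) - θ (a 1) * θ (a 0) := by
  rw [wpow1_eq_altPow, altPow_apply, ← Equiv.sum_comp Equiv.Perm.decomposeFin.symm,
    Fintype.sum_prod_type]
  simp [Fin.sum_univ_two, List.ofFn_succ, Equiv.Perm.decomposeFin.symm_sign, sub_eq_add_neg]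

theorem wedge_wpow1 (θ : L →ₗ[ℝ] Module.End ℝ E) (m n : ℕ) :
    wedge (wpow1 (fun u => θ (u 0)) m) (wpow1 (fun u => θ (u 0)) n) =
      wpow1 (fun u => θ (u 0)) (m + n) := by
  simp only [wpow1_eq_altPow, wedge_altPow]

theorem wpow_wpow1_two (θ : L →ₗ[ℝ] Module.End ℝ E) (k : ℕ) :
    wpow (wpow1 (fun u => θ (u 0)) 2) k = wpow1 (fun u => θ (u 0)) (2 * k) := by
  induction k with
  | zero => rfl
  | succ k ih =>
    funext a
    rw [wpow, ih, wedge_wpow1]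
    exact apply_comp_finCast (wpow1 fun u => θ (u 0)) _ a

end AlternatingPower

section Trace

variable (C : Type*) {E : Type*} [CommRing C] [Algebra ℝ C] [AddCommGroup E]
  [Module ℝ E] [Module C E] [IsScalarTower ℝ C E]

theorem trR_restrictScalars (g : E →ₗ[C] E) :
    trR C (g.restrictScalars ℝ) = LinearMap.trace C E g := by
  have h : ∃ g' : E →ₗ[C] E, ⇑g' = ⇑(g.restrictScalars ℝ) := ⟨g, rfl⟩
  rw [trR, dif_pos h, DFunLike.coe_injective h.choose_spec]

theorem trR_smul (r : ℝ) (e : Module.End ℝ E) : trR C (r • e) = r • trR C e := by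
  by_cases he : ∃ g : E →ₗ[C] E, ⇑g = ⇑e
  · obtain ⟨g, hg⟩ := he
    obtain rfl : g.restrictScalars ℝ = e := DFunLike.coe_injective hg
    rw [← LinearMap.restrictScalars_smul, trR_restrictScalars, trR_restrictScalars,
      LinearMap.map_smul_of_tower]
  obtain rfl | hr := eq_or_ne r 0
  · simpa using trR_restrictScalars C (0 : E →ₗ[C] E)
  have hre : ¬∃ g : E →ₗ[C] E, ⇑g = ⇑(r • e) := by
    rintro ⟨g, hg⟩
    exact he ⟨r⁻¹ • g, by simp [hg, hr]⟩
  -- Neither side is `C`-linear, so both traces take the default value `0`.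
  rw [trR, trR, dif_neg he, dif_neg hre, smul_zero]

end Trace

section Integral

open scoped Nat

variable {C : Type*} [CommRing C] [Algebra ℝ C]

theorem dual_intPolyTo (ℓ : Dual ℝ C) (s : ℝ) {f : ℝ → C} {P : Polynomial C}
    (hf : ∀ t : ℝ, f t = P.eval (algebraMap ℝ C t)) :
    ℓ (intPolyTo s f) = ∫ t in (0 : ℝ)..s, ℓ (f t) := by
  have h : ∃ P : Polynomial C, ∀ t : ℝ, f t = P.eval (algebraMap ℝ C t) := ⟨P, hf⟩
  have hℓ (t : ℝ) : ℓ (f t) =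
      ∑ k ∈ Finset.range (h.choose.natDegree + 1), t ^ k * ℓ (h.choose.coeff k) := by
    simp only [h.choose_spec t, Polynomial.eval_eq_sum_range, map_sum, ← map_pow, mul_comm,
      ← Algebra.smul_def, map_smul, smul_eq_mul]
  simp only [intPolyTo, dif_pos h, hℓ]
  rw [intervalIntegral.integral_finsetSum fun k _ =>
    Continuous.intervalIntegrable (by fun_prop) _ _]
  simp [integral_pow]

theorem intPolyTo_eval_smul (s : ℝ) (Q : Polynomial ℝ) (c : C) :
    intPolyTo s (fun t => Q.eval t • c) = (∫ t in (0 : ℝ)..s, Q.eval t) • c := by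
  have hP (t : ℝ) : Q.eval t • c =
      (Q.map (algebraMap ℝ C) * Polynomial.C c).eval (algebraMap ℝ C t) := by
    simp [Algebra.smul_def, Polynomial.eval_map, Polynomial.eval₂_at_apply]
  rw [← sub_eq_zero, ← forall_dual_apply_eq_zero_iff ℝ]
  intro ℓ
  simp [map_sub, dual_intPolyTo ℓ s hP]

theorem integral_pow_mul_one_sub_pow (m n : ℕ) :
    ∫ t in (0 : ℝ)..1, t ^ m * (1 - t) ^ n = (m ! * n ! : ℝ) / (m + n + 1)! := by
  have hbeta : Complex.betaIntegral (m + 1) (n + 1) =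
      ((∫ t in (0 : ℝ)..1, t ^ m * (1 - t) ^ n : ℝ) : ℂ) := by
    simp [Complex.betaIntegral, ← intervalIntegral.integral_ofReal]
  have hgamma := Complex.Gamma_mul_Gamma_eq_betaIntegral
    (s := m + 1) (t := n + 1) (by norm_cast; positivity) (by norm_cast; positivity)
  rw [hbeta, show (m + 1 + (n + 1) : ℂ) = (m + n + 1 : ℕ) + 1 by push_cast; ring] at hgamma
  simp only [Complex.Gamma_nat_eq_factorial] at hgamma
  rw [eq_div_iff (by positivity), mul_comm]
  exact_mod_cast hgamma.symm

theorem intPolyTo_pow_smul (k : ℕ) (c : C) :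
    intPolyTo 1 (fun t => (-(t * (1 - t))) ^ k • c) =
      ((-1) ^ k * ((k ! * k ! : ℝ) / (2 * k + 1)!)) • c := by
  have h := intPolyTo_eval_smul 1 ((-(.X * (1 - .X))) ^ k) c
  simp only [Polynomial.eval_pow, Polynomial.eval_neg, Polynomial.eval_mul, Polynomial.eval_X,
    Polynomial.eval_sub, Polynomial.eval_one] at h
  rw [h]
  simp only [neg_pow (_ * _), mul_pow, intervalIntegral.integral_const_mul,
    integral_pow_mul_one_sub_pow, two_mul]

end Integral

section Curvature

variable {L E : Type*} [LieRing L] [LieAlgebra ℝ L] [AddCommGroup E] [Module ℝ E]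

theorem curv2_add_smul_sub (D0 D1 : L →ₗ[ℝ] Module.End ℝ E) (t : ℝ) :
    curv2 (D0 + t • (D1 - D0)) = (1 - t) • curv2 D0 + t • curv2 D1 +
      (-(t * (1 - t))) • wpow1 (fun u => (D1 - D0) (u 0)) 2 := by
  funext v
  simp only [Pi.add_apply, Pi.smul_apply, wpow1_two_apply]
  simp only [curv2, curv, LinearMap.add_apply, LinearMap.smul_apply, LinearMap.sub_apply,
    mul_add, add_mul, mul_sub, sub_mul, smul_mul_assoc, mul_smul_comm]
  module

theorem wedge_wpow_curv2_of_flat {D0 D1 : L →ₗ[ℝ] Module.End ℝ E}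
    (hflat0 : ∀ a b : L, curv D0 a b = 0) (hflat1 : ∀ a b : L, curv D1 a b = 0)
    (t : ℝ) (k : ℕ) :
    wedge (fun u : Fin 1 → L => (D1 - D0) (u 0)) (wpow (curv2 (D0 + t • (D1 - D0))) k) =
      (-(t * (1 - t))) ^ k • wpow1 (fun u => (D1 - D0) (u 0)) (1 + 2 * k) := by
  have hcurv0 : curv2 D0 = 0 := funext fun v => hflat0 _ _
  have hcurv1 : curv2 D1 = 0 := funext fun v => hflat1 _ _
  rw [curv2_add_smul_sub, hcurv0, hcurv1, smul_zero, smul_zero, zero_add, zero_add, wpow_smul,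
    wpow_wpow1_two, wedge_smul_right, ← wedge_wpow1, wpow1_one]

end Curvature

section ChernSimons

open scoped Nat

theorem stmt19_general {L C E : Type*}
    [LieRing L] [LieAlgebra ℝ L] [CommRing C] [Algebra ℝ C]
    [AddCommGroup E] [Module ℝ E] [Module C E] [IsScalarTower ℝ C E]
    [Module.Finite C E] [Module.Free C E]
    (D0 D1 : L →ₗ[ℝ] Module.End ℝ E)
    (hflat0 : ∀ a b : L, curv D0 a b = 0) (hflat1 : ∀ a b : L, curv D1 a b = 0)
    (p : ℕ) (hp : 1 ≤ p) (v : Fin (2 * (p - 1) + 1) → L) :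
    csPair C D0 D1 p v =
      ((-1 : ℝ) ^ (p + 1) * (p ! * (p - 1)!) / (2 * p - 1)!) •
        trR C (wpow1 (fun u => (D1 - D0) (u 0)) (2 * (p - 1) + 1) v) := by
  have hintegrand (t : ℝ) :
      trR C (wedge (fun u : Fin 1 → L => (D1 - D0) (u 0))
        (wpow (curv2 (D0 + t • (D1 - D0))) (p - 1))
        (fun i => v (Fin.cast (Nat.add_comm _ _) i))) =
      (-(t * (1 - t))) ^ (p - 1) •
        trR C (wpow1 (fun u => (D1 - D0) (u 0)) (2 * (p - 1) + 1) v) := by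
    rw [wedge_wpow_curv2_of_flat hflat0 hflat1, Pi.smul_apply, trR_smul]
    congr 2
    exact apply_comp_finCast (wpow1 _) _ v
  have hdegree : 2 * p - 1 = 2 * (p - 1) + 1 := by omega
  simp only [csPair, hintegrand, intPolyTo_pow_smul, smul_smul, hdegree]
  congr 1
  obtain ⟨q, rfl⟩ := Nat.exists_eq_add_of_le' hp
  push_cast [Nat.add_sub_cancel, Nat.factorial_succ q]
  ring

end ChernSimons

/-- if `∇⁰` and `∇¹` are both flat and `λ = ∇¹ − ∇⁰`, then
`cs_p(∇⁰,∇¹) = (−1)^{p+1} · (p!·(p−1)!/(2p−1)!) · Tr_*(λ^{∧(2p−1)})`. -/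
theorem stmt19 {L : Type*} {C : Type*} {E : Type*}
    [LieRing L] [LieAlgebra ℝ L] [CommRing C] [Algebra ℝ C] [Module C L]
    [AddCommGroup E] [Module ℝ E] [Module C E] [IsScalarTower ℝ C E]
    [Module.Finite C E] [Module.Free C E]
    (ρ : L →ₗ[ℝ] Derivation ℝ C C)
    (hρ : ∀ (a b : L) (f : C), ρ ⁅a, b⁆ f = ρ a (ρ b f) - ρ b (ρ a f))
    (hLeib : ∀ (a b : L) (f : C), ⁅a, f • b⁆ = f • ⁅a, b⁆ + ρ a f • b)
    (D0 D1 : L →ₗ[ℝ] Module.End ℝ E) (h0 : IsConn ρ D0) (h1 : IsConn ρ D1)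
    (hflat0 : ∀ a b : L, curv D0 a b = 0) (hflat1 : ∀ a b : L, curv D1 a b = 0)
    (p : ℕ) (hp : 1 ≤ p) :
    ∀ v : Fin (2 * (p - 1) + 1) → L,
      csPair C D0 D1 p v
        = ((-1 : ℝ) ^ (p + 1) * ((p.factorial : ℝ) * ((p - 1).factorial : ℝ))
              / ((2 * p - 1).factorial : ℝ)) •
            trR C (wpow1 (fun u : Fin 1 → L => (D1 - D0) (u 0)) (2 * p - 1)
              (fun i => v (Fin.cast (by omega) i))) := by
  intro v
  rw [stmt19_general D0 D1 hflat0 hflat1 p hp, apply_comp_finCast (wpow1 _) (by omega) v]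
end
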